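/- arXiv:2010.10490 — 4 statements merged into one kernel-verified Lean document; each statement's English description precedes it below -/
import Mathlib

section
/- There exist a complex number c' and a constant C > 0 such that for every real σ with 1/2 < σ ≤ 1 the series ∑_p β1(p)·conj(β2(p))/p^{2σ} over all primes p converges absolutely and | ∑_p β1(p)·conj(β2(p))/p^{2σ} − δξ log(1/(σ − 1/2)) − c' | ≤ C (σ − 1/2) log(1/(σ − 1/2)). -/
open Finset ComplexConjugate

/-! Put `g p = β₁ p * conj (β₂ p)`, `S x = ∑ p ≤ x, g p / p` and `s = 2σ - 1`. By partial summation
and the substitution `x = e^u`, the series `∑ p, g p / p ^ (2σ)` equals `s ∫₀^∞ S(e^u) e^(-su) du`.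
Here `S(e^u) = κ log u + c + O(1/u)`. The main term contributes exactly `c - κ (γ + log s)`, because
`∫₀^∞ e^(-v) log v dv = Γ'(1) = -γ`; the error term contributes `O(s log (1/s))`, by an explicit
bound for the exponential integral. As `‖g p‖ ≤ ‖β₁ p‖² + ‖β₂ p‖²`, the sums `∑ p ≤ x, ‖g p‖ / p`
are `O(log log x)`, which gives absolute convergence. -/

section Laplace

open MeasureTheory Set Filter Topology Real

variable {F : Type*} [NormedAddCommGroup F] [NormedSpace ℝ F] {f g : ℝ → F} {s : ℝ}

/-- The Laplace transform `∫₀^∞ e^{-su} f(u) du` of `f` at a real point `s`; it is `0` when the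
integral diverges. -/
noncomputable def laplace (f : ℝ → F) (s : ℝ) : F :=
  ∫ u in Ioi 0, exp (-(s * u)) • f u

/-- Absolute convergence of the integral defining `laplace f s`. -/
def LaplaceConvergent (f : ℝ → F) (s : ℝ) : Prop :=
  IntegrableOn (fun u ↦ exp (-(s * u)) • f u) (Ioi 0)

theorem LaplaceConvergent.add (hf : LaplaceConvergent f s) (hg : LaplaceConvergent g s) :
    LaplaceConvergent (fun u ↦ f u + g u) s := by
  simpa only [LaplaceConvergent, IntegrableOn, smul_add] using Integrable.fun_add hf hg

theorem laplace_add (hf : LaplaceConvergent f s) (hg : LaplaceConvergent g s) :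
    laplace (fun u ↦ f u + g u) s = laplace f s + laplace g s := by
  simpa only [laplace, smul_add] using integral_add hf hg

theorem LaplaceConvergent.smul_const {f : ℝ → ℝ} (hf : LaplaceConvergent f s) (c : F) :
    LaplaceConvergent (fun u ↦ f u • c) s := by
  simpa only [LaplaceConvergent, IntegrableOn, smul_assoc] using Integrable.smul_const hf c

theorem laplace_smul_const [CompleteSpace F] (f : ℝ → ℝ) (c : F) (s : ℝ) :
    laplace (fun u ↦ f u • c) s = laplace f s • c := by
  simpa only [laplace, smul_assoc] using integral_smul_const (fun u ↦ exp (-(s * u)) • f u) c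

theorem laplaceConvergent_const (c : F) (hs : 0 < s) : LaplaceConvergent (fun _ ↦ c) s := by
  simpa only [LaplaceConvergent, IntegrableOn, neg_mul] using
    (integrableOn_exp_mul_Ioi (neg_neg_of_pos hs) 0).smul_const c

theorem laplace_const [CompleteSpace F] (c : F) (hs : 0 < s) :
    laplace (fun _ ↦ c) s = s⁻¹ • c := by
  have h := integral_exp_mul_Ioi (neg_neg_of_pos hs) 0
  simp only [neg_mul, mul_zero, exp_zero, neg_div_neg_eq, one_div] at h
  rw [laplace, integral_smul_const, h]

theorem integral_exp_neg_mul_log_Ioi :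
    ∫ v in Ioi 0, exp (-v) * log v = -eulerMascheroniConstant := by
  have h_deriv := Complex.hasDerivAt_GammaIntegral (s := 1) (by simp)
  have h_Gamma : Complex.Gamma =ᶠ[𝓝 1] Complex.GammaIntegral := by
    filter_upwards [(isOpen_lt continuous_const Complex.continuous_re).mem_nhds
      (show (0 : ℝ) < (1 : ℂ).re by simp)] with z hz using Complex.Gamma_eq_integral hz
  have h_eq := (h_deriv.congr_of_eventuallyEq h_Gamma).unique Complex.hasDerivAt_Gamma_one
  simp only [sub_self, Complex.cpow_zero, one_mul] at h_eq
  simp_rw [mul_comm (exp _)]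
  exact_mod_cast h_eq

theorem laplaceConvergent_log (hs : 0 < s) : LaplaceConvergent log s := by
  have h_one : IntegrableOn (fun v ↦ exp (-v) * log v) (Ioi 0) := by
    -- A divergent Bochner integral would be `0`, not `-γ`.
    refine Integrable.of_integral_ne_zero ?_
    rw [integral_exp_neg_mul_log_Ioi]
    linarith [one_half_lt_eulerMascheroniConstant]
  have h_scaled : IntegrableOn (fun u ↦ exp (-(s * u)) * log (s * u)) (Ioi 0) := by
    rwa [integrableOn_Ioi_comp_mul_left_iff (fun v ↦ exp (-v) * log v) 0 hs, mul_zero]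
  refine (h_scaled.sub (laplaceConvergent_const (log s) hs)).congr_fun (fun u hu ↦ ?_)
    measurableSet_Ioi
  simp only [Pi.sub_apply, smul_eq_mul]
  rw [log_mul hs.ne' (ne_of_gt hu)]
  ring

theorem laplace_log (hs : 0 < s) : laplace log s = -(eulerMascheroniConstant + log s) / s := by
  have h_scaled := integral_comp_mul_left_Ioi (fun v ↦ exp (-v) * log v) 0 hs
  rw [mul_zero, integral_exp_neg_mul_log_Ioi, smul_eq_mul] at h_scaled
  have h_split : ∫ u in Ioi 0, exp (-(s * u)) * log (s * u) = s⁻¹ * log s + laplace log s := by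
    rw [← smul_eq_mul s⁻¹, ← laplace_const _ hs,
      ← laplace_add (laplaceConvergent_const _ hs) (laplaceConvergent_log hs)]
    refine setIntegral_congr_fun measurableSet_Ioi fun u hu ↦ ?_
    rw [log_mul hs.ne' (ne_of_gt hu), smul_eq_mul]
  rw [neg_div, add_div, div_eq_inv_mul, div_eq_inv_mul]
  linarith

theorem hasDerivAt_exp_neg_mul_log_one_add_inv {x : ℝ} (hx : 0 < x) :
    HasDerivAt (fun y ↦ exp (-y) * log (1 + y⁻¹))
      (-(exp (-x) * (log (1 + x⁻¹) + (x * (1 + x))⁻¹))) x := by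
  have h_log : HasDerivAt (fun y ↦ log (1 + y⁻¹)) (-(x ^ 2)⁻¹ / (1 + x⁻¹)) x :=
    ((hasDerivAt_inv hx.ne').const_add 1).log (by positivity)
  refine ((hasDerivAt_neg x).exp.fun_mul h_log).congr_deriv ?_
  field_simp
  ring

theorem inv_le_log_one_add_inv_add {x : ℝ} (hx : 0 < x) :
    x⁻¹ ≤ log (1 + x⁻¹) + (x * (1 + x))⁻¹ := by
  have h_log := one_sub_inv_le_log_of_pos (show 0 < 1 + x⁻¹ by positivity)
  have h_eq : x⁻¹ = 1 - (1 + x⁻¹)⁻¹ + (x * (1 + x))⁻¹ := by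
    field_simp
    ring
  linarith

theorem integrableOn_exp_neg_div_Ioi {a : ℝ} (ha : 0 < a) :
    IntegrableOn (fun x ↦ exp (-x) / x) (Ioi a) := by
  refine Integrable.mono' ((integrableOn_exp_neg_Ioi a).div_const a)
    (by fun_prop : Measurable fun x : ℝ ↦ exp (-x) / x).aestronglyMeasurable ?_
  filter_upwards [ae_restrict_mem measurableSet_Ioi] with x hx
  have hax : a < x := hx
  rw [norm_div, norm_of_nonneg (exp_nonneg _), norm_of_nonneg (ha.trans hax).le]
  gcongr

/- The derivative of `-exp (-x) * log (1 + x⁻¹)` dominates `exp (-x) / x`. -/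
theorem integral_exp_neg_div_Ioi_le {a : ℝ} (ha : 0 < a) :
    ∫ x in Ioi a, exp (-x) / x ≤ exp (-a) * log (1 + a⁻¹) := by
  set G' : ℝ → ℝ := fun x ↦ -(exp (-x) * (log (1 + x⁻¹) + (x * (1 + x))⁻¹))
  have h_deriv : ∀ x ∈ Ici a, HasDerivAt (fun y ↦ exp (-y) * log (1 + y⁻¹)) (G' x) x :=
    fun x hx ↦ hasDerivAt_exp_neg_mul_log_one_add_inv (ha.trans_le hx)
  have h_le : ∀ x ∈ Ioi a, exp (-x) / x ≤ -G' x := fun x hx ↦ by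
    rw [div_eq_mul_inv, neg_neg]
    gcongr
    exact inv_le_log_one_add_inv_add (ha.trans hx)
  have h_nonpos : ∀ x ∈ Ioi a, G' x ≤ 0 := fun x hx ↦
    neg_nonneg.1 ((div_nonneg (exp_nonneg _) (ha.trans hx).le).trans (h_le x hx))
  have h_lim : Tendsto (fun y ↦ exp (-y) * log (1 + y⁻¹)) atTop (𝓝 0) := by
    have h_log : Tendsto (fun y : ℝ ↦ log (1 + y⁻¹)) atTop (𝓝 (log (1 + 0))) :=
      (tendsto_inv_atTop_zero.const_add 1).log (by norm_num)
    simpa only [zero_mul] using tendsto_exp_neg_atTop_nhds_zero.mul h_log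
  calc ∫ x in Ioi a, exp (-x) / x
      ≤ ∫ x in Ioi a, -G' x := setIntegral_mono_on (integrableOn_exp_neg_div_Ioi ha)
        (integrableOn_Ioi_deriv_of_nonpos' h_deriv h_nonpos h_lim).neg measurableSet_Ioi h_le
    _ = exp (-a) * log (1 + a⁻¹) := by
      rw [integral_neg, integral_Ioi_of_hasDerivAt_of_nonpos' h_deriv h_nonpos h_lim]
      ring

theorem integrableOn_exp_neg_mul_div_Ioi {a : ℝ} (ha : 0 < a) (hs : 0 < s) :
    IntegrableOn (fun u ↦ exp (-(s * u)) / u) (Ioi a) := by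
  have h_scaled := (integrableOn_Ioi_comp_mul_left_iff (fun x ↦ exp (-x) / x) a hs).2
    (integrableOn_exp_neg_div_Ioi (mul_pos hs ha))
  refine IntegrableOn.congr_fun (h_scaled.const_mul s) (fun u _ ↦ ?_) measurableSet_Ioi
  field_simp

theorem integral_exp_neg_mul_div_Ioi_le {a : ℝ} (ha : 0 < a) (hs : 0 < s) :
    ∫ u in Ioi a, exp (-(s * u)) / u ≤ exp (-(s * a)) * log (1 + (s * a)⁻¹) := by
  calc ∫ u in Ioi a, exp (-(s * u)) / u
      = s * ∫ u in Ioi a, exp (-(s * u)) / (s * u) := by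
        rw [← integral_const_mul]
        congr with u
        field_simp
    _ = ∫ x in Ioi (s * a), exp (-x) / x := by
        rw [integral_comp_mul_left_Ioi (fun x ↦ exp (-x) / x) a hs, smul_eq_mul,
          mul_inv_cancel_left₀ hs.ne']
    _ ≤ exp (-(s * a)) * log (1 + (s * a)⁻¹) := integral_exp_neg_div_Ioi_le (mul_pos hs ha)

section Tail

variable {E : ℝ → F} {A L : ℝ}

theorem norm_exp_neg_mul_smul_le {u : ℝ} {x : F} (hs : 0 < s) (hu : 0 ≤ u) :
    ‖exp (-(s * u)) • x‖ ≤ ‖x‖ := by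
  rw [norm_smul, norm_of_nonneg (exp_nonneg _)]
  exact mul_le_of_le_one_left (norm_nonneg _) (exp_le_one_iff.2 (by nlinarith))

theorem norm_exp_neg_mul_smul_le_mul_div {u : ℝ} (hu : ‖E u‖ ≤ A / u) :
    ‖exp (-(s * u)) • E u‖ ≤ A * (exp (-(s * u)) / u) := by
  rw [norm_smul, norm_of_nonneg (exp_nonneg _), mul_div_left_comm]
  gcongr

theorem laplaceConvergent_of_norm_le_div (hL : 0 < L) (hE_meas : AEStronglyMeasurable E)
    (hE_int : IntegrableOn E (Ioc 0 L)) (hE : ∀ u, L ≤ u → ‖E u‖ ≤ A / u) (hs : 0 < s) :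
    LaplaceConvergent E s := by
  rw [LaplaceConvergent, ← Ioc_union_Ioi_eq_Ioi hL.le]
  refine IntegrableOn.union (Integrable.mono hE_int (by fun_prop) ?_)
    (Integrable.mono' ((integrableOn_exp_neg_mul_div_Ioi hL hs).const_mul A) (by fun_prop) ?_)
  · filter_upwards [ae_restrict_mem measurableSet_Ioc] with u hu
    exact norm_exp_neg_mul_smul_le hs hu.1.le
  · filter_upwards [ae_restrict_mem measurableSet_Ioi] with u hu
    exact norm_exp_neg_mul_smul_le_mul_div (hE u (le_of_lt hu))

theorem norm_laplace_le_of_norm_le_div (hL : 0 < L) (hE_meas : AEStronglyMeasurable E)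
    (hE_int : IntegrableOn E (Ioc 0 L)) (hE : ∀ u, L ≤ u → ‖E u‖ ≤ A / u) (hs : 0 < s) :
    ‖laplace E s‖ ≤ (∫ u in Ioc 0 L, ‖E u‖) + A * log (1 + (s * L)⁻¹) := by
  have hA : 0 ≤ A := by simpa using (le_div_iff₀ hL).1 ((norm_nonneg _).trans (hE L le_rfl))
  have h_near : ‖∫ u in Ioc 0 L, exp (-(s * u)) • E u‖ ≤ ∫ u in Ioc 0 L, ‖E u‖ := by
    refine norm_integral_le_of_norm_le hE_int.norm ?_
    filter_upwards [ae_restrict_mem measurableSet_Ioc] with u hu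
    exact norm_exp_neg_mul_smul_le hs hu.1.le
  have h_far : ‖∫ u in Ioi L, exp (-(s * u)) • E u‖ ≤ A * log (1 + (s * L)⁻¹) := by
    calc ‖∫ u in Ioi L, exp (-(s * u)) • E u‖
        ≤ ∫ u in Ioi L, A * (exp (-(s * u)) / u) := by
          refine norm_integral_le_of_norm_le
            ((integrableOn_exp_neg_mul_div_Ioi hL hs).const_mul A) ?_
          filter_upwards [ae_restrict_mem measurableSet_Ioi] with u hu
          exact norm_exp_neg_mul_smul_le_mul_div (hE u (le_of_lt hu))
      _ ≤ A * (exp (-(s * L)) * log (1 + (s * L)⁻¹)) := by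
          rw [integral_const_mul]
          gcongr
          exact integral_exp_neg_mul_div_Ioi_le hL hs
      _ ≤ A * log (1 + (s * L)⁻¹) := by
          gcongr
          refine mul_le_of_le_one_left (log_nonneg ?_) (exp_le_one_iff.2 ?_)
          · exact le_add_of_nonneg_right (by positivity)
          · exact neg_nonpos.2 (by positivity)
  have h_conv := laplaceConvergent_of_norm_le_div hL hE_meas hE_int hE hs
  rw [LaplaceConvergent, ← Ioc_union_Ioi_eq_Ioi hL.le, integrableOn_union] at h_conv
  rw [laplace, ← Ioc_union_Ioi_eq_Ioi hL.le,
    setIntegral_union (Ioc_disjoint_Ioi le_rfl) measurableSet_Ioi h_conv.1 h_conv.2]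
  exact norm_add_le_of_le h_near h_far

end Tail

theorem norm_smul_laplace_sub_le [CompleteSpace F] {S : ℝ → F} {κ c : F} {A L : ℝ} (hL : 0 < L)
    (hS_meas : AEStronglyMeasurable S) (hS_int : IntegrableOn S (Ioc 0 L))
    (hS : ∀ u, L ≤ u → ‖S u - (log u • κ + c)‖ ≤ A / u) (hs : 0 < s) :
    ‖s • laplace S s - (c - (eulerMascheroniConstant + log s) • κ)‖ ≤
      s * ((∫ u in Ioc 0 L, ‖S u - (log u • κ + c)‖) + A * log (1 + (s * L)⁻¹)) := by
  have hE_meas : AEStronglyMeasurable (fun u ↦ S u - (log u • κ + c)) := by fun_prop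
  have h_log : IntegrableOn log (Ioc 0 L) :=
    (intervalIntegrable_iff_integrableOn_Ioc_of_le hL.le).1 intervalIntegral.intervalIntegrable_log'
  have hE_int : IntegrableOn (fun u ↦ S u - (log u • κ + c)) (Ioc 0 L) :=
    hS_int.sub ((h_log.smul_const κ).add (integrable_const c))
  have h_main := (laplaceConvergent_log hs).smul_const κ
  have h_const := laplaceConvergent_const c hs
  have h_laplace : laplace S s = laplace (fun u ↦ S u - (log u • κ + c)) s +
      ((-(eulerMascheroniConstant + log s) / s) • κ + s⁻¹ • c) := by
    rw [← laplace_log hs, ← laplace_smul_const, ← laplace_const c hs, ← laplace_add h_main h_const,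
      ← laplace_add (laplaceConvergent_of_norm_le_div hL hE_meas hE_int hS hs)
        (h_main.add h_const)]
    simp only [sub_add_cancel]
  have h_eq : s • laplace S s - (c - (eulerMascheroniConstant + log s) • κ) =
      s • laplace (fun u ↦ S u - (log u • κ + c)) s := by
    rw [h_laplace, smul_add, smul_add, smul_inv_smul₀ hs.ne', smul_smul, mul_div_cancel₀ _ hs.ne']
    module
  rw [h_eq, norm_smul, norm_of_nonneg hs.le]
  gcongr
  exact norm_laplace_le_of_norm_le_div hL hE_meas hE_int hS hs

end Laplace

section DirichletSeries

open Filter Asymptotics MeasureTheory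

theorem integral_Ioi_exp_eq_integral_exp_smul {F : Type*} [NormedAddCommGroup F] [NormedSpace ℝ F]
    (h : ℝ → F) (a : ℝ) :
    ∫ t in Set.Ioi (Real.exp a), h t = ∫ u in Set.Ioi a, Real.exp u • h (Real.exp u) := by
  rw [← Real.image_exp_Ioi, integral_image_eq_integral_abs_deriv_smul measurableSet_Ioi
    (fun u _ ↦ (Real.hasDerivAt_exp u).hasDerivWithinAt) Real.exp_injective.injOn]
  simp only [Real.abs_exp]

theorem LSeries_eq_smul_laplace (f : ℕ → ℂ) {r s : ℝ} (hr : 0 ≤ r) (hrs : r < s)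
    (hO : (fun n ↦ ∑ k ∈ Icc 1 n, ‖f k‖) =O[atTop] fun n : ℕ ↦ (n : ℝ) ^ r) :
    LSeries f s = s • laplace (fun u ↦ ∑ k ∈ Icc 1 ⌊Real.exp u⌋₊, f k) s := by
  have h_cpow (u : ℝ) : Real.exp u * (Real.exp u : ℂ) ^ (-((s : ℂ) + 1)) = Real.exp (-(s * u)) := by
    have h_exponent : -((s : ℂ) + 1) = (-(s + 1) : ℝ) := by push_cast; ring
    rw [h_exponent, ← Complex.ofReal_cpow (Real.exp_nonneg u), ← Real.exp_mul,
      ← Complex.ofReal_mul, ← Real.exp_add]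
    congr 2
    ring
  rw [LSeries_eq_mul_integral' f hr (by simpa using hrs) hO, ← Real.exp_zero,
    integral_Ioi_exp_eq_integral_exp_smul, laplace, Complex.real_smul]
  congr with u
  rw [Complex.real_smul, Complex.real_smul, mul_left_comm, h_cpow, mul_comm]

theorem exists_norm_LSeries_sub_le (f : ℕ → ℂ) {κ c : ℂ} {A X : ℝ} (hX : 1 < X)
    (hO : ∀ r : ℝ, 0 < r →
      (fun n ↦ ∑ k ∈ Icc 1 n, ‖f k‖) =O[atTop] fun n : ℕ ↦ (n : ℝ) ^ r)
    (hf : ∀ x, X ≤ x →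
      ‖∑ k ∈ Icc 1 ⌊x⌋₊, f k - (κ * Real.log (Real.log x) + c)‖ ≤ A / Real.log x) :
    ∃ K, 0 ≤ K ∧ ∀ s : ℝ, 0 < s →
      ‖LSeries f s - (c - κ * (Real.eulerMascheroniConstant + Real.log s))‖ ≤
        s * (K + A * Real.log (1 + (s * Real.log X)⁻¹)) := by
  set S : ℝ → ℂ := fun u ↦ ∑ k ∈ Icc 1 ⌊Real.exp u⌋₊, f k
  have hL : 0 < Real.log X := Real.log_pos hX
  have hS_meas : Measurable S :=
    (measurable_from_nat (f := fun n ↦ ∑ k ∈ Icc 1 n, f k)).comp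
      (Nat.measurable_floor.comp Real.measurable_exp)
  have hS_int : IntegrableOn S (Set.Ioc 0 (Real.log X)) := by
    refine Measure.integrableOn_of_bounded (M := ∑ k ∈ Icc 1 ⌊X⌋₊, ‖f k‖) (by simp)
      hS_meas.aestronglyMeasurable ?_
    filter_upwards [ae_restrict_mem measurableSet_Ioc] with u hu
    have hu : Real.exp u ≤ X := (Real.le_log_iff_exp_le (by linarith)).1 hu.2
    exact (norm_sum_le _ _).trans (sum_le_sum_of_subset_of_nonneg
      (Icc_subset_Icc_right (Nat.floor_mono hu)) fun _ _ _ ↦ norm_nonneg _)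
  have hS (u : ℝ) (hu : Real.log X ≤ u) : ‖S u - (Real.log u • κ + c)‖ ≤ A / u := by
    simpa only [S, Real.log_exp, Complex.real_smul, mul_comm κ] using
      hf (Real.exp u) ((Real.log_le_iff_le_exp (by linarith)).1 hu)
  refine ⟨∫ u in Set.Ioc 0 (Real.log X), ‖S u - (Real.log u • κ + c)‖,
    integral_nonneg fun _ ↦ norm_nonneg _, fun s hs ↦ ?_⟩
  have h_main := norm_smul_laplace_sub_le hL hS_meas.aestronglyMeasurable hS_int hS hs
  rwa [← LSeries_eq_smul_laplace f (half_pos hs).le (half_lt_self hs) (hO _ (half_pos hs)),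
    Complex.real_smul, Complex.ofReal_add, mul_comm _ κ] at h_main

theorem isBigO_rpow_of_isBigO_sub_log_log {T : ℝ → ℝ} {ξ r : ℝ}
    (hT : (fun x ↦ T x - ξ * Real.log (Real.log x)) =O[atTop] (1 : ℝ → ℝ)) (hr : 0 < r) :
    T =O[atTop] fun x ↦ x ^ r := by
  have h_one : (1 : ℝ → ℝ) =O[atTop] fun x : ℝ ↦ x ^ r :=
    (isLittleO_const_left.2 <| .inr <|
      tendsto_norm_atTop_atTop.comp (tendsto_rpow_atTop hr)).isBigO
  have h_log : (fun x ↦ Real.log (Real.log x)) =O[atTop] fun x ↦ x ^ r :=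
    (Real.isLittleO_log_id_atTop.comp_tendsto Real.tendsto_log_atTop).isBigO.trans
      (isLittleO_log_rpow_atTop hr).isBigO
  simpa only [sub_add_cancel] using (hT.trans h_one).add (h_log.const_mul_left ξ)

theorem isBigO_sum_primesLE_rpow {a : ℕ → ℝ} {ξ A X r : ℝ} (hr : 0 < r)
    (ha : ∀ x, X ≤ x →
      |∑ p ∈ Nat.primesLE ⌊x⌋₊, a p - ξ * Real.log (Real.log x)| ≤ A) :
    (fun n ↦ ∑ p ∈ Nat.primesLE n, a p) =O[atTop] fun n : ℕ ↦ (n : ℝ) ^ r := by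
  have h_bounded : (fun x ↦ ∑ p ∈ Nat.primesLE ⌊x⌋₊, a p - ξ * Real.log (Real.log x))
      =O[atTop] (1 : ℝ → ℝ) := by
    refine .of_bound A ?_
    filter_upwards [eventually_ge_atTop X] with x hx
    simpa only [Pi.one_apply, norm_one, mul_one, Real.norm_eq_abs] using ha x hx
  simpa only [Function.comp_def, Nat.floor_natCast] using
    (isBigO_rpow_of_isBigO_sub_log_log h_bounded hr).comp_tendsto tendsto_natCast_atTop_atTop

theorem isBigO_sum_norm_mul_conj_div {β₁ β₂ : ℕ → ℂ} {S : ℕ → Finset ℕ} {φ : ℕ → ℝ}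
    {l : Filter ℕ} (h₁ : (fun n ↦ ∑ p ∈ S n, ‖β₁ p‖ ^ 2 / (p : ℝ)) =O[l] φ)
    (h₂ : (fun n ↦ ∑ p ∈ S n, ‖β₂ p‖ ^ 2 / (p : ℝ)) =O[l] φ) :
    (fun n ↦ ∑ p ∈ S n, ‖β₁ p * conj (β₂ p) / (p : ℂ)‖) =O[l] φ := by
  have h_term (p : ℕ) :
      ‖β₁ p * conj (β₂ p) / (p : ℂ)‖ ≤ ‖β₁ p‖ ^ 2 / (p : ℝ) + ‖β₂ p‖ ^ 2 / (p : ℝ) := by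
    rw [norm_div, norm_mul, RCLike.norm_conj, Complex.norm_natCast, ← add_div]
    gcongr
    nlinarith [sq_nonneg (‖β₁ p‖ - ‖β₂ p‖), sq_nonneg ‖β₁ p‖, sq_nonneg ‖β₂ p‖]
  refine (IsBigO.of_norm_le fun n ↦ ?_).trans (h₁.add h₂)
  rw [Real.norm_of_nonneg (sum_nonneg fun _ _ ↦ norm_nonneg _), ← sum_add_distrib]
  exact sum_le_sum fun p _ ↦ h_term p

end DirichletSeries

section PrimeSeries

theorem sum_Icc_one_indicator_primes {M : Type*} [AddCommMonoid M] (g : ℕ → M) (n : ℕ) :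
    ∑ k ∈ Icc 1 n, {p : ℕ | p.Prime}.indicator g k = ∑ p ∈ n.primesLE, g p := by
  rw [sum_indicator_eq_sum_filter]
  refine sum_congr ?_ fun _ _ ↦ rfl
  ext p
  simp only [mem_filter, mem_Icc, Set.mem_ofPred_eq, Nat.mem_primesLE]
  exact ⟨fun h ↦ ⟨h.1.2, h.2⟩, fun h ↦ ⟨⟨h.2.one_le, h.1⟩, h.2⟩⟩

theorem term_indicator_primes_div_natCast (g : ℕ → ℂ) (x : ℝ) :
    LSeries.term ({p : ℕ | p.Prime}.indicator fun p ↦ g p / p) ((x - 1 : ℝ) : ℂ) =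
      {p : ℕ | p.Prime}.indicator fun p ↦ g p / ((p : ℝ) ^ x : ℝ) := by
  ext n
  by_cases hn : n.Prime
  · have hn0 : (0 : ℝ) < n := mod_cast hn.pos
    have h_pow : (n : ℂ) * (n : ℂ) ^ ((x - 1 : ℝ) : ℂ) = ((n : ℝ) ^ x : ℝ) := by
      rw [← Complex.ofReal_natCast, ← Complex.ofReal_cpow hn0.le, ← Complex.ofReal_mul,
        Real.rpow_sub_one hn0.ne', mul_div_cancel₀ _ hn0.ne']
    have hn_mem : n ∈ {p : ℕ | p.Prime} := hn
    rw [LSeries.term_of_ne_zero hn.ne_zero, Set.indicator_of_mem hn_mem,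
      Set.indicator_of_mem hn_mem, div_div, h_pow]
  · simp [LSeries.term_def, hn]

theorem summable_primes_div_rpow_iff (g : ℕ → ℂ) (x : ℝ) :
    Summable (fun p : Nat.Primes ↦ g p / (((p : ℕ) : ℝ) ^ x : ℝ)) ↔
      LSeriesSummable ({p : ℕ | p.Prime}.indicator fun p ↦ g p / p) ((x - 1 : ℝ) : ℂ) := by
  rw [LSeriesSummable, term_indicator_primes_div_natCast]
  exact summable_subtype_iff_indicator (f := fun p : ℕ ↦ g p / ((p : ℝ) ^ x : ℝ))

theorem tsum_primes_div_rpow_eq_LSeries (g : ℕ → ℂ) (x : ℝ) :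
    ∑' p : Nat.Primes, g p / (((p : ℕ) : ℝ) ^ x : ℝ) =
      LSeries ({p : ℕ | p.Prime}.indicator fun p ↦ g p / p) ((x - 1 : ℝ) : ℂ) := by
  rw [LSeries, term_indicator_primes_div_natCast]
  exact _root_.tsum_subtype {p : ℕ | p.Prime} fun p ↦ g p / ((p : ℝ) ^ x : ℝ)

end PrimeSeries

theorem exists_mul_add_log_one_add_inv_le {K A L : ℝ} (hK : 0 ≤ K) (hA : 0 ≤ A) (hL : 0 < L) :
    ∃ C, 0 < C ∧ ∀ t, 0 < t → t ≤ 1 / 2 →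
      2 * t * (K + A * Real.log (1 + (2 * t * L)⁻¹)) ≤ C * t * Real.log (1 / t) := by
  set B := Real.log (1 + L⁻¹)
  have hB : 0 ≤ B := Real.log_nonneg (le_add_of_nonneg_right (by positivity))
  refine ⟨2 * (2 * (K + A * B) + A) + 1, by positivity, fun t ht ht_half ↦ ?_⟩
  set Λ := Real.log (1 / t)
  have h_inv : 2 ≤ 1 / t := (le_div_iff₀ ht).2 (by linarith)
  have hΛ : 1 ≤ 2 * Λ := by
    have : Real.log 2 ≤ Λ := Real.log_le_log two_pos h_inv
    linarith [Real.log_two_gt_d9]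
  have h_log : Real.log (1 + (2 * t * L)⁻¹) ≤ B + Λ := by
    rw [← Real.log_mul (by positivity) (by positivity)]
    refine Real.log_le_log (by positivity) ?_
    have h_cross : 0 ≤ L⁻¹ * (1 / t) := by positivity
    calc 1 + (2 * t * L)⁻¹ = 1 + L⁻¹ * (1 / t) / 2 := by field_simp
      _ ≤ (1 + L⁻¹) * (1 / t) := by linarith
  calc 2 * t * (K + A * Real.log (1 + (2 * t * L)⁻¹))
      ≤ 2 * t * (K * (2 * Λ) + A * (B * (2 * Λ) + Λ)) := by
        gcongr
        · exact le_mul_of_one_le_right hK hΛ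
        · exact h_log.trans (add_le_add_left (le_mul_of_one_le_right hB hΛ) Λ)
    _ = 2 * (2 * (K + A * B) + A) * t * Λ := by ring
    _ ≤ (2 * (2 * (K + A * B) + A) + 1) * t * Λ := by
        gcongr
        · linarith
        · linarith

theorem stmt_3_general (g : ℕ → ℂ) (κ c : ℂ) (A X : ℝ) (hX : 1 < X)
    (h_growth : ∀ r : ℝ, 0 < r →
      (fun n ↦ ∑ p ∈ Nat.primesLE n, ‖g p / (p : ℂ)‖) =O[Filter.atTop] fun n : ℕ ↦ (n : ℝ) ^ r)
    (h_sum : ∀ x : ℝ, X ≤ x →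
      ‖∑ p ∈ Nat.primesLE ⌊x⌋₊, g p / (p : ℂ) - (κ * Real.log (Real.log x) + c)‖ ≤
        A / Real.log x) :
    ∃ C : ℝ, 0 < C ∧ ∀ σ : ℝ, 1 / 2 < σ → σ ≤ 1 →
      Summable (fun p : Nat.Primes ↦ ‖g p / (((p : ℕ) : ℝ) ^ (2 * σ) : ℝ)‖) ∧
      ‖∑' p : Nat.Primes, g p / (((p : ℕ) : ℝ) ^ (2 * σ) : ℝ) -
          κ * Real.log (1 / (σ - 1 / 2)) -
          (c - κ * (Real.eulerMascheroniConstant + Real.log 2))‖ ≤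
        C * (σ - 1 / 2) * Real.log (1 / (σ - 1 / 2)) := by
  have hL : 0 < Real.log X := Real.log_pos hX
  have hA : 0 ≤ A := by simpa using (le_div_iff₀ hL).1 ((norm_nonneg _).trans (h_sum X le_rfl))
  set f := {p : ℕ | p.Prime}.indicator fun p ↦ g p / (p : ℂ)
  have hO (r : ℝ) (hr : 0 < r) :
      (fun n ↦ ∑ k ∈ Icc 1 n, ‖f k‖) =O[Filter.atTop] fun n : ℕ ↦ (n : ℝ) ^ r := by
    simpa only [f, norm_indicator_eq_indicator_norm, sum_Icc_one_indicator_primes] using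
      h_growth r hr
  obtain ⟨K, hK, h_LSeries⟩ := exists_norm_LSeries_sub_le f hX hO
    (by simpa only [f, sum_Icc_one_indicator_primes] using h_sum)
  obtain ⟨C, hC, h_error⟩ := exists_mul_add_log_one_add_inv_le hK hA hL
  refine ⟨C, hC, fun σ hσ hσ1 ↦ ?_⟩
  have ht : 0 < σ - 1 / 2 := by linarith
  have hs : 2 * σ - 1 = 2 * (σ - 1 / 2) := by ring
  constructor
  · refine ((summable_primes_div_rpow_iff g _).2 ?_).norm
    exact LSeriesSummable_of_sum_norm_bigO (hO _ ht) ht.le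
      (by rw [Complex.ofReal_re]; linarith)
  · have h_main := (h_LSeries (2 * (σ - 1 / 2)) (by positivity)).trans
      (h_error _ ht (by linarith))
    rw [Real.log_mul two_ne_zero ht.ne'] at h_main
    rw [tsum_primes_div_rpow_eq_LSeries, hs]
    refine le_of_eq_of_le (congrArg norm ?_) h_main
    rw [one_div (σ - 1 / 2), Real.log_inv]
    push_cast
    ring

/-- Under the Selberg-orthonormality-type hypotheses on `β1, β2`, there exist a complex
constant `c'` and `C > 0` such that for `1/2 < σ ≤ 1` the series
`∑_p β1(p) conj(β2(p)) / p^{2σ}` converges absolutely and equals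
`δ ξ log(1/(σ−1/2)) + c' + O((σ−1/2) log(1/(σ−1/2)))`. -/
theorem stmt_3 (β1 β2 : ℕ → ℂ) (ξ ξ1 ξ2 : ℝ) (hξ : 0 ≤ ξ) (hξ1 : 0 ≤ ξ1) (hξ2 : 0 ≤ ξ2)
    (δ : ℝ) (hδ : δ = 0 ∨ δ = 1) (c : ℂ) (A : ℝ) (hA : 0 < A)
    (h12 : ∀ x : ℝ, 3 ≤ x →
      ‖(∑ p ∈ (Finset.range (⌊x⌋₊ + 1)).filter Nat.Prime,
            β1 p * conj (β2 p) / (p : ℂ)) -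
          (((δ * ξ * Real.log (Real.log x) : ℝ) : ℂ) + c)‖ ≤ A / Real.log x)
    (h1 : ∀ x : ℝ, 3 ≤ x →
      |(∑ p ∈ (Finset.range (⌊x⌋₊ + 1)).filter Nat.Prime, ‖β1 p‖ ^ 2 / (p : ℝ)) -
          ξ1 * Real.log (Real.log x)| ≤ A)
    (h2 : ∀ x : ℝ, 3 ≤ x →
      |(∑ p ∈ (Finset.range (⌊x⌋₊ + 1)).filter Nat.Prime, ‖β2 p‖ ^ 2 / (p : ℝ)) -
          ξ2 * Real.log (Real.log x)| ≤ A) :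
    ∃ c' : ℂ, ∃ C : ℝ, 0 < C ∧ ∀ σ : ℝ, 1 / 2 < σ → σ ≤ 1 →
      Summable (fun p : Nat.Primes =>
        ‖β1 (p : ℕ) * conj (β2 (p : ℕ)) / (((((p : ℕ) : ℝ) ^ (2 * σ) : ℝ)) : ℂ)‖) ∧
      ‖(∑' p : Nat.Primes,
            β1 (p : ℕ) * conj (β2 (p : ℕ)) / (((((p : ℕ) : ℝ) ^ (2 * σ) : ℝ)) : ℂ)) -
          ((δ * ξ * Real.log (1 / (σ - 1 / 2)) : ℝ) : ℂ) - c'‖ ≤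
        C * (σ - 1 / 2) * Real.log (1 / (σ - 1 / 2)) := by
  obtain ⟨C, hC, h⟩ := stmt_3_general (fun p ↦ β1 p * conj (β2 p)) (δ * ξ : ℝ) c A 3 (by norm_num)
    (fun r hr ↦ isBigO_sum_norm_mul_conj_div (isBigO_sum_primesLE_rpow hr h1)
      (isBigO_sum_primesLE_rpow hr h2))
    (by simpa only [Complex.ofReal_mul, Nat.primesLE_eq_filter_range] using h12)
  exact ⟨_, C, hC, by simpa only [Complex.ofReal_mul] using h⟩
end

section
/- There exists a constant C > 0 such that for every real σ with 1/2 < σ ≤ 1 and every real Y with 2 ≤ Y ≤ exp(1/(2σ − 1)), the series ∑_{p > Y} β1(p)·conj(β2(p))/p^{2σ} over primes p > Y converges absolutely and | ∑_{p > Y} β1(p)·conj(β2(p))/p^{2σ} − δξ log( 1/((σ − 1/2) log Y) ) | ≤ C. -/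
open Finset ComplexConjugate

/-!
The weight `n ^ (-s) = exp (-s log n)` is close to the sharp cutoff `s log n ≤ 1`: with
`u = s log n` they differ by at most `min u u⁻¹`. If the sums of `g n` over `n ≤ x` are
`ξ log log x + O(1)`, then each window `T < log n ≤ e T` carries `O(1)` of the mass of `g`, and
`min u u⁻¹` decays geometrically from window to window, so replacing the weight by the cutoff costs
only `O(1)`, uniformly in `s`. The cut-off sum over `Y < n ≤ exp (1 / s)` is a difference of two
partial sums. For `β₁ β₂` the majorant `g` comes from `|β₁ β₂| ≤ |β₁|² + |β₂|²`.
-/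

lemma abs_exp_neg_sub_ite_le_min_inv {u : ℝ} (hu : 0 < u) :
    |Real.exp (-u) - if u ≤ 1 then 1 else 0| ≤ min u u⁻¹ := by
  have exp_neg_le_inv : Real.exp (-u) ≤ u⁻¹ := by
    rw [Real.exp_neg]
    exact inv_anti₀ hu (by linarith [Real.add_one_le_exp u])
  split_ifs with h
  · have one_le_inv : 1 ≤ u⁻¹ := (one_le_inv₀ hu).2 h
    rw [abs_sub_comm, abs_of_nonneg (by simpa using hu.le)]
    exact le_min (by linarith [Real.one_sub_le_exp_neg u]) (by linarith [Real.exp_pos (-u)])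
  · rw [sub_zero, Real.abs_exp]
    have inv_le_one : u⁻¹ ≤ 1 := inv_le_one_of_one_le₀ (not_le.1 h).le
    exact le_min (by linarith) exp_neg_le_inv

lemma summable_exp_neg_abs_int : Summable fun k : ℤ => Real.exp (-|(k : ℝ)|) := by
  refine Summable.of_nat_of_neg ?_ ?_ <;>
  simpa only [Int.cast_natCast, Int.cast_neg, abs_neg, Nat.abs_cast] using Real.summable_exp_neg_nat

lemma min_inv_le_exp_neg_abs_ceil_log {u : ℝ} (hu : 0 < u) :
    min u u⁻¹ ≤ Real.exp 1 * Real.exp (-|(⌈Real.log u⌉ : ℝ)|) := by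
  rw [← Real.exp_add]
  rcases abs_cases (⌈Real.log u⌉ : ℝ) with ⟨h, -⟩ | ⟨h, -⟩ <;> rw [h]
  · rw [min_le_iff, ← Real.log_le_iff_le_exp (inv_pos.2 hu), Real.log_inv]
    right
    linarith [Int.ceil_lt_add_one (Real.log u)]
  · rw [min_le_iff, ← Real.log_le_iff_le_exp hu]
    left
    linarith [Int.le_ceil (Real.log u)]

lemma mem_Ioc_of_ceil_log_eq {u : ℝ} (hu : 0 < u) {k : ℤ} (hk : ⌈Real.log u⌉ = k) :
    u ∈ Set.Ioc (Real.exp (k - 1)) (Real.exp 1 * Real.exp (k - 1)) := by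
  rw [← Real.exp_add, add_sub_cancel, Set.mem_Ioc, ← Real.lt_log_iff_exp_lt hu,
    ← Real.log_le_iff_le_exp hu]
  exact Int.ceil_eq_iff.1 hk

lemma sum_mul_min_inv_le {ι : Type*} {F : Finset ι} {w u : ι → ℝ} {M : ℝ}
    (hw : ∀ i ∈ F, 0 ≤ w i) (hu : ∀ i ∈ F, 0 < u i)
    (hM : ∀ T : ℝ, 0 < T → ∑ i ∈ F with u i ∈ Set.Ioc T (Real.exp 1 * T), w i ≤ M) :
    ∑ i ∈ F, w i * min (u i) (u i)⁻¹ ≤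
      M * (Real.exp 1 * ∑' k : ℤ, Real.exp (-|(k : ℝ)|)) := by
  classical
  have hM0 : 0 ≤ M :=
    (sum_nonneg fun i hi => hw i (mem_filter.1 hi).1).trans (hM 1 one_pos)
  set κ : ι → ℤ := fun i => ⌈Real.log (u i)⌉
  have fiber_le (k : ℤ) : ∑ i ∈ F with κ i = k, w i ≤ M := by
    refine (sum_le_sum_of_subset_of_nonneg ?_ ?_).trans (hM (Real.exp (k - 1)) (Real.exp_pos _))
    · intro i hi
      obtain ⟨hiF, hik⟩ := mem_filter.1 hi
      exact mem_filter.2 ⟨hiF, mem_Ioc_of_ceil_log_eq (hu i hiF) hik⟩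
    · exact fun i hi _ => hw i (mem_filter.1 hi).1
  calc ∑ i ∈ F, w i * min (u i) (u i)⁻¹
      ≤ ∑ i ∈ F, w i * (Real.exp 1 * Real.exp (-|(κ i : ℝ)|)) :=
        sum_le_sum fun i hi =>
          mul_le_mul_of_nonneg_left (min_inv_le_exp_neg_abs_ceil_log (hu i hi)) (hw i hi)
    _ = ∑ k ∈ F.image κ, (∑ i ∈ F with κ i = k, w i) * (Real.exp 1 * Real.exp (-|(k : ℝ)|)) := by
        rw [← sum_fiberwise_of_maps_to fun i hi => mem_image_of_mem κ hi]
        refine sum_congr rfl fun k _ => ?_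
        rw [sum_mul]
        exact sum_congr rfl fun i hi => by rw [(mem_filter.1 hi).2]
    _ ≤ ∑ k ∈ F.image κ, M * (Real.exp 1 * Real.exp (-|(k : ℝ)|)) := by
        gcongr with k
        exact fiber_le k
    _ = M * (Real.exp 1 * ∑ k ∈ F.image κ, Real.exp (-|(k : ℝ)|)) := by simp only [mul_sum]
    _ ≤ M * (Real.exp 1 * ∑' k : ℤ, Real.exp (-|(k : ℝ)|)) := by
        gcongr
        exact summable_exp_neg_abs_int.sum_le_tsum _ fun k _ => (Real.exp_pos _).le

lemma hasSum_ite_lt_ite_le {α : Type*} [AddCommMonoid α] [TopologicalSpace α] (f : ℕ → α)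
    {x y : ℝ} (hx : 0 ≤ x) (hxy : x ≤ y) :
    HasSum (fun n : ℕ => if x < n then if (n : ℝ) ≤ y then f n else 0 else 0)
      (∑ n ∈ Ico (⌊x⌋₊ + 1) (⌊y⌋₊ + 1), f n) := by
  have mem_iff (n : ℕ) : n ∈ Ico (⌊x⌋₊ + 1) (⌊y⌋₊ + 1) ↔ x < n ∧ (n : ℝ) ≤ y := by
    rw [mem_Ico, Nat.succ_le_iff, Nat.lt_succ_iff, Nat.floor_lt hx, Nat.le_floor_iff (hx.trans hxy)]
  simp only [← ite_and, ← mem_iff]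
  rw [← sum_congr rfl fun n hn => if_pos hn]
  exact hasSum_sum_of_ne_finset_zero fun n hn => if_neg hn

variable {E : Type*} [NormedAddCommGroup E] [NormedSpace ℝ E]

lemma norm_rpow_neg_smul_sub_ite_le {n : ℕ} (hn : 1 < n) {s : ℝ} (hs : 0 < s) (v : E) :
    ‖(n : ℝ) ^ (-s) • v - if (n : ℝ) ≤ Real.exp (1 / s) then v else 0‖ ≤
      ‖v‖ * min (s * Real.log n) (s * Real.log n)⁻¹ := by
  have hn' : (1 : ℝ) < n := by exact_mod_cast hn
  have hu : 0 < s * Real.log n := mul_pos hs (Real.log_pos hn')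
  have cutoff : (n : ℝ) ≤ Real.exp (1 / s) ↔ s * Real.log n ≤ 1 := by
    rw [← Real.log_le_iff_le_exp (by linarith), le_div_iff₀' hs]
  have weight : (n : ℝ) ^ (-s) = Real.exp (-(s * Real.log n)) := by
    rw [Real.rpow_def_of_pos (by linarith)]
    ring_nf
  have factor : (n : ℝ) ^ (-s) • v - (if (n : ℝ) ≤ Real.exp (1 / s) then v else 0) =
      (Real.exp (-(s * Real.log n)) - if s * Real.log n ≤ 1 then 1 else 0) • v := by
    simp only [cutoff, weight, sub_smul, ite_smul, one_smul, zero_smul]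
  rw [factor, norm_smul, Real.norm_eq_abs, mul_comm]
  gcongr
  exact abs_exp_neg_sub_ite_le_min_inv hu

/-- The partial sums of `f` satisfy `∑_{n ≤ x} f n = (log log x) L + O(1)` as `x → ∞`, as the
Selberg orthonormality conjecture predicts for `β₁(p) conj(β₂(p)) / p` supported on the primes. -/
def HasLogLogSum (f : ℕ → E) (L : E) : Prop :=
  (fun x : ℝ => ∑ n ∈ range (⌊x⌋₊ + 1), f n - Real.log (Real.log x) • L)
    =O[Filter.atTop] fun _ => (1 : ℝ)

namespace HasLogLogSum

variable {f : ℕ → E} {L : E} {g : ℕ → ℝ} {ξ : ℝ}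

lemma add {f' : ℕ → E} {L' : E} (hf : HasLogLogSum f L) (hf' : HasLogLogSum f' L') :
    HasLogLogSum (f + f') (L + L') := by
  refine (Asymptotics.IsBigO.add hf hf').congr_left fun x => ?_
  simp only [Pi.add_apply, sum_add_distrib, smul_add]
  abel

lemma exists_norm_sub_le (hf : HasLogLogSum f L) {a : ℝ} (ha : 1 < a) :
    ∃ B : ℝ, ∀ x : ℝ, a ≤ x →
      ‖∑ n ∈ range (⌊x⌋₊ + 1), f n - Real.log (Real.log x) • L‖ ≤ B := by
  obtain ⟨B, hB⟩ := hf.bound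
  obtain ⟨b, hb⟩ := Filter.eventually_atTop.1 hB
  set D := max |Real.log (Real.log a)| |Real.log (Real.log b)|
  refine ⟨max B (∑ n ∈ range (⌊b⌋₊ + 1), ‖f n‖ + D * ‖L‖), fun x hax => ?_⟩
  rcases le_total b x with hbx | hxb
  · exact le_max_of_le_left (by simpa using hb x hbx)
  · have x_pos : 0 < x := by linarith
    have log_pos : 0 < Real.log x := Real.log_pos (by linarith)
    have log_log_le : |Real.log (Real.log x)| ≤ D := by
      apply abs_le_max_abs_abs <;> gcongr
      exact Real.log_pos ha
    refine le_max_of_le_right ((norm_sub_le _ _).trans ?_)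
    rw [norm_smul, Real.norm_eq_abs]
    gcongr
    refine (norm_sum_le _ _).trans (sum_le_sum_of_subset_of_nonneg ?_ fun _ _ _ => norm_nonneg _)
    gcongr

lemma exists_norm_sum_Ico_sub_le (hf : HasLogLogSum f L) {a : ℝ} (ha : 1 < a) :
    ∃ B : ℝ, ∀ x y : ℝ, a ≤ x → x ≤ y →
      ‖∑ n ∈ Ico (⌊x⌋₊ + 1) (⌊y⌋₊ + 1), f n -
        (Real.log (Real.log y) - Real.log (Real.log x)) • L‖ ≤ B := by
  obtain ⟨B, hB⟩ := hf.exists_norm_sub_le ha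
  refine ⟨B + B, fun x y hax hxy => ?_⟩
  have hle : ⌊x⌋₊ + 1 ≤ ⌊y⌋₊ + 1 := by gcongr
  rw [sum_Ico_eq_sub _ hle, sub_smul, sub_sub_sub_comm]
  exact (norm_sub_le _ _).trans (add_le_add (hB y (hax.trans hxy)) (hB x hax))

lemma exists_sum_window_le (hg : HasLogLogSum g ξ) (hg0 : ∀ n, 0 ≤ g n) :
    ∃ M : ℝ, ∀ (F : Finset ℕ) (T : ℝ), 0 < T →
      ∑ n ∈ F with Real.log (n : ℕ) ∈ Set.Ioc T (Real.exp 1 * T), g n ≤ M := by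
  obtain ⟨B, hB⟩ := hg.exists_norm_sum_Ico_sub_le (a := 3 / 2) (by norm_num)
  refine ⟨ξ + B, fun F T hT => ?_⟩
  -- No integer lies in `(1, 3 / 2]`, so the window loses nothing when `T` is raised to `T'`.
  set T' : ℝ := max T (Real.log (3 / 2))
  have hT' : 0 < T' := lt_max_of_lt_left hT
  set x : ℝ := Real.exp T'
  set y : ℝ := Real.exp (Real.exp 1 * T')
  have hx : 3 / 2 ≤ x := (Real.log_le_iff_le_exp (by norm_num)).1 (le_max_right _ _)
  have hxy : x ≤ y :=
    Real.exp_le_exp.2 (le_mul_of_one_le_left hT'.le (Real.one_le_exp zero_le_one))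
  have log_log_sub : Real.log (Real.log y) - Real.log (Real.log x) = 1 := by
    simp only [x, y, Real.log_exp]
    rw [Real.log_mul (Real.exp_ne_zero _) hT'.ne', Real.log_exp, add_sub_cancel_right]
  have window_subset : {n ∈ F | Real.log (n : ℕ) ∈ Set.Ioc T (Real.exp 1 * T)} ⊆
      Ico (⌊x⌋₊ + 1) (⌊y⌋₊ + 1) := by
    intro n hn
    obtain ⟨-, hTn, hnT⟩ := mem_filter.1 hn
    have one_lt : (1 : ℝ) < n := (Real.log_pos_iff n.cast_nonneg).1 (hT.trans hTn)
    have two_le : (2 : ℝ) ≤ n := by exact_mod_cast one_lt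
    rw [mem_Ico, Nat.succ_le_iff, Nat.lt_succ_iff, Nat.floor_lt (Real.exp_pos _).le,
      Nat.le_floor_iff (Real.exp_pos _).le, ← Real.lt_log_iff_exp_lt (by linarith),
      ← Real.log_le_iff_le_exp (by linarith)]
    refine ⟨max_lt hTn (Real.log_lt_log (by norm_num) (by linarith)), hnT.trans ?_⟩
    gcongr
    exact le_max_left _ _
  have Ico_le := (abs_le.1 (hB x y hx hxy)).2
  rw [log_log_sub, one_smul] at Ico_le
  linarith [sum_le_sum_of_subset_of_nonneg window_subset fun n _ _ => hg0 n]

lemma exists_sum_mul_min_inv_le (hg : HasLogLogSum g ξ) (hg0 : ∀ n, 0 ≤ g n) :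
    ∃ C : ℝ, ∀ (F : Finset ℕ) (s : ℝ), (∀ n ∈ F, 1 < n) → 0 < s →
      ∑ n ∈ F, g n * min (s * Real.log n) (s * Real.log n)⁻¹ ≤ C := by
  obtain ⟨M, hM⟩ := hg.exists_sum_window_le hg0
  refine ⟨M * (Real.exp 1 * ∑' k : ℤ, Real.exp (-|(k : ℝ)|)), fun F s hF hs =>
    sum_mul_min_inv_le (fun n _ => hg0 n) (fun n hn =>
      mul_pos hs (Real.log_pos (by exact_mod_cast hF n hn))) fun T hT => ?_⟩
  have rescale (n : ℕ) : s * Real.log n ∈ Set.Ioc T (Real.exp 1 * T) ↔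
      Real.log n ∈ Set.Ioc (T / s) (Real.exp 1 * (T / s)) := by
    rw [Set.mem_Ioc, Set.mem_Ioc, div_lt_iff₀' hs, ← mul_div_assoc, le_div_iff₀' hs]
  simpa only [rescale] using hM F (T / s) (by positivity)

lemma exists_norm_tsum_tail_sub_sum_Ico_le [CompleteSpace E] (hg : HasLogLogSum g ξ)
    (hfg : ∀ n, ‖f n‖ ≤ g n) :
    ∃ C : ℝ, ∀ s : ℝ, 0 < s → ∀ y : ℝ, 1 ≤ y → y ≤ Real.exp (1 / s) →
      Summable (fun n : ℕ => if y < n then (n : ℝ) ^ (-s) • f n else 0) ∧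
      ‖∑' n : ℕ, (if y < n then (n : ℝ) ^ (-s) • f n else 0) -
        ∑ n ∈ Ico (⌊y⌋₊ + 1) (⌊Real.exp (1 / s)⌋₊ + 1), f n‖ ≤ C := by
  have hg0 (n : ℕ) : 0 ≤ g n := (norm_nonneg _).trans (hfg n)
  obtain ⟨C, hC⟩ := hg.exists_sum_mul_min_inv_le hg0
  refine ⟨C, fun s hs y hy hyX => ?_⟩
  set X := Real.exp (1 / s)
  set tail : ℕ → E := fun n => if y < n then (n : ℝ) ^ (-s) • f n else 0
  set cut : ℕ → E := fun n => if y < n then if (n : ℝ) ≤ X then f n else 0 else 0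
  set err : ℕ → ℝ := fun n => if y < n then g n * min (s * Real.log n) (s * Real.log n)⁻¹ else 0
  have one_lt {n : ℕ} (hn : y < n) : 1 < n := by exact_mod_cast hy.trans_lt hn
  have err_nonneg (n : ℕ) : 0 ≤ err n := by
    have := hg0 n
    positivity
  have sum_err_le (F : Finset ℕ) : ∑ n ∈ F, err n ≤ C := by
    rw [← sum_filter]
    exact hC _ s (fun n hn => one_lt (mem_filter.1 hn).2) hs
  have norm_sub_le_err (n : ℕ) : ‖tail n - cut n‖ ≤ err n := by
    by_cases hn : y < n
    · simp only [tail, cut, err, if_pos hn]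
      refine (norm_rpow_neg_smul_sub_ite_le (one_lt hn) hs _).trans ?_
      gcongr
      exact hfg n
    · simp [tail, cut, err, hn]
  have err_summable : Summable err := summable_of_sum_le err_nonneg sum_err_le
  have cut_hasSum := hasSum_ite_lt_ite_le f (by linarith) hyX
  have tail_summable : Summable tail := by
    simpa [cut] using (err_summable.of_norm_bounded norm_sub_le_err).add cut_hasSum.summable
  refine ⟨tail_summable, ?_⟩
  rw [← cut_hasSum.tsum_eq, ← tail_summable.tsum_sub cut_hasSum.summable]
  exact (tsum_of_norm_bounded err_summable.hasSum norm_sub_le_err).trans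
    (err_summable.tsum_le_of_sum_le sum_err_le)

lemma exists_norm_tsum_tail_sub_le [CompleteSpace E] (hf : HasLogLogSum f L)
    (hg : HasLogLogSum g ξ) (hfg : ∀ n, ‖f n‖ ≤ g n) {a : ℝ} (ha : 1 < a) :
    ∃ C : ℝ, ∀ s : ℝ, 0 < s → ∀ y : ℝ, a ≤ y → y ≤ Real.exp (1 / s) →
      Summable (fun n : ℕ => if y < n then (n : ℝ) ^ (-s) • f n else 0) ∧
      ‖∑' n : ℕ, (if y < n then (n : ℝ) ^ (-s) • f n else 0) -
        Real.log (1 / (s * Real.log y)) • L‖ ≤ C := by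
  obtain ⟨C, hC⟩ := hg.exists_norm_tsum_tail_sub_sum_Ico_le hfg
  obtain ⟨B, hB⟩ := hf.exists_norm_sum_Ico_sub_le ha
  refine ⟨C + B, fun s hs y hay hyX => ?_⟩
  have hy : 1 < y := ha.trans_le hay
  obtain ⟨tail_summable, norm_sub_sum_le⟩ := hC s hs y hy.le hyX
  have log_eq : Real.log (1 / (s * Real.log y)) =
      Real.log (Real.log (Real.exp (1 / s))) - Real.log (Real.log y) := by
    rw [Real.log_exp, ← Real.log_div (by positivity) (Real.log_pos hy).ne', div_div]
  refine ⟨tail_summable, ?_⟩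
  rw [log_eq]
  exact (norm_sub_le_norm_sub_add_norm_sub _ _ _).trans
    (add_le_add norm_sub_sum_le (hB y _ hay hyX))

lemma indicator_prime_of_norm_sub_le {h : ℕ → E} {c : E} {A b : ℝ}
    (hA : ∀ x : ℝ, b ≤ x →
      ‖∑ p ∈ (range (⌊x⌋₊ + 1)).filter Nat.Prime, h p - (Real.log (Real.log x) • L + c)‖ ≤ A) :
    HasLogLogSum ({p | p.Prime}.indicator h) L := by
  refine .of_bound (A + ‖c‖) ((Filter.eventually_ge_atTop b).mono fun x hx => ?_)
  have sum_eq : ∑ n ∈ range (⌊x⌋₊ + 1), {p : ℕ | p.Prime}.indicator h n =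
      ∑ p ∈ (range (⌊x⌋₊ + 1)).filter Nat.Prime, h p := by
    simp only [Set.indicator_apply, Set.mem_ofPred_eq, sum_filter]
  rw [norm_one, mul_one, sum_eq, ← sub_add_cancel (_ - _) c, sub_sub]
  exact (norm_add_le _ _).trans (add_le_add_left (hA x hx) _)

lemma exists_norm_tsum_primes_tail_sub_le [CompleteSpace E] {h : ℕ → E} {w : ℕ → ℝ}
    (hh : HasLogLogSum ({p | p.Prime}.indicator h) L)
    (hw : HasLogLogSum ({p | p.Prime}.indicator w) ξ)
    (hhw : ∀ p, p.Prime → ‖h p‖ ≤ w p) {a : ℝ} (ha : 1 < a) :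
    ∃ C : ℝ, ∀ s : ℝ, 0 < s → ∀ y : ℝ, a ≤ y → y ≤ Real.exp (1 / s) →
      Summable (fun p : Nat.Primes => if y < (p : ℕ) then ((p : ℕ) : ℝ) ^ (-s) • h p else 0) ∧
      ‖∑' p : Nat.Primes, (if y < (p : ℕ) then ((p : ℕ) : ℝ) ^ (-s) • h p else 0) -
        Real.log (1 / (s * Real.log y)) • L‖ ≤ C := by
  have majorant (n : ℕ) : ‖{p : ℕ | p.Prime}.indicator h n‖ ≤ {p : ℕ | p.Prime}.indicator w n := by
    rw [norm_indicator_eq_indicator_norm]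
    exact Set.indicator_le_indicator' (hhw n)
  obtain ⟨C, hC⟩ := hh.exists_norm_tsum_tail_sub_le hw majorant ha
  refine ⟨C, fun s hs y hay hyX => ?_⟩
  have tail_eq : (fun n : ℕ => if y < n then (n : ℝ) ^ (-s) • {p : ℕ | p.Prime}.indicator h n
      else 0) = {p : ℕ | p.Prime}.indicator fun n : ℕ =>
        if y < n then (n : ℝ) ^ (-s) • h n else 0 := by
    ext n
    by_cases hn : n.Prime <;> simp [hn]
  have tail_bound := hC s hs y hay hyX
  rwa [tail_eq, ← summable_subtype_iff_indicator, ← _root_.tsum_subtype] at tail_bound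

end HasLogLogSum

lemma norm_mul_conj_div_natCast_le {𝕜 : Type*} [RCLike 𝕜] (z w : 𝕜) (n : ℕ) :
    ‖z * conj w / (n : 𝕜)‖ ≤ ‖z‖ ^ 2 / (n : ℝ) + ‖w‖ ^ 2 / (n : ℝ) := by
  rw [norm_div, norm_mul, RCLike.norm_conj, RCLike.norm_natCast, ← add_div]
  gcongr
  nlinarith [sq_nonneg (‖z‖ - ‖w‖), sq_nonneg (‖z‖ + ‖w‖)]

lemma rpow_neg_smul_div_natCast {n : ℕ} (hn : n ≠ 0) (s : ℝ) (z : ℂ) :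
    (n : ℝ) ^ (-(s - 1)) • (z / (n : ℂ)) = z / (((n : ℝ) ^ s : ℝ) : ℂ) := by
  have hn' : (0 : ℝ) < n := by positivity
  have rpow_eq : (n : ℝ) ^ (-(s - 1)) = n / (n : ℝ) ^ s := by
    rw [neg_sub, Real.rpow_sub hn', Real.rpow_one]
  rw [rpow_eq, Complex.real_smul]
  push_cast
  field_simp

lemma one_le_log_of_three_le {x : ℝ} (hx : 3 ≤ x) : 1 ≤ Real.log x :=
  (Real.le_log_iff_exp_le (by linarith)).2 (Real.exp_one_lt_three.le.trans hx)

theorem stmt_4_general {β1 β2 : ℕ → ℂ} {ξ1 ξ2 : ℝ} {L : ℂ}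
    (h12 : HasLogLogSum ({p | p.Prime}.indicator fun p => β1 p * conj (β2 p) / (p : ℂ)) L)
    (h1 : HasLogLogSum ({p | p.Prime}.indicator fun p => ‖β1 p‖ ^ 2 / (p : ℝ)) ξ1)
    (h2 : HasLogLogSum ({p | p.Prime}.indicator fun p => ‖β2 p‖ ^ 2 / (p : ℝ)) ξ2) :
    ∃ C : ℝ, 0 < C ∧ ∀ σ : ℝ, 1 / 2 < σ →
      ∀ Y : ℝ, 2 ≤ Y → Y ≤ Real.exp (1 / (2 * σ - 1)) →
      Summable (fun p : Nat.Primes =>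
        ‖(if Y < ((p : ℕ) : ℝ) then
            β1 (p : ℕ) * conj (β2 (p : ℕ)) / (((((p : ℕ) : ℝ) ^ (2 * σ) : ℝ)) : ℂ)
          else 0)‖) ∧
      ‖(∑' p : Nat.Primes,
            if Y < ((p : ℕ) : ℝ) then
              β1 (p : ℕ) * conj (β2 (p : ℕ)) / (((((p : ℕ) : ℝ) ^ (2 * σ) : ℝ)) : ℂ)
            else 0) -
          L * (Real.log (1 / ((σ - 1 / 2) * Real.log Y)) : ℝ)‖ ≤ C := by
  have hsum := h1.add h2
  rw [← Set.indicator_add'] at hsum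
  obtain ⟨C, hC⟩ := h12.exists_norm_tsum_primes_tail_sub_le hsum
    (fun p _ => norm_mul_conj_div_natCast_le (β1 p) (β2 p) p) one_lt_two
  refine ⟨|C| + ‖L‖ * Real.log 2 + 1, by positivity, fun σ hσ Y hY hYσ => ?_⟩
  have hs : 0 < 2 * σ - 1 := by linarith
  have hlogY : 0 < Real.log Y := Real.log_pos (by linarith)
  have log_eq : Real.log (1 / ((σ - 1 / 2) * Real.log Y)) =
      Real.log (1 / ((2 * σ - 1) * Real.log Y)) + Real.log 2 := by
    rw [← Real.log_mul (by positivity) two_ne_zero]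
    congr 1
    field_simp
  have norm_log_two : ‖L * (Real.log 2 : ℝ)‖ = ‖L‖ * Real.log 2 := by
    rw [norm_mul, Complex.norm_real, Real.norm_of_nonneg (by positivity)]
  obtain ⟨tail_summable, norm_tsum_sub_le⟩ := hC _ hs Y hY hYσ
  simp only [fun p : Nat.Primes => rpow_neg_smul_div_natCast p.2.ne_zero]
    at tail_summable norm_tsum_sub_le
  rw [Complex.real_smul, mul_comm _ L] at norm_tsum_sub_le
  refine ⟨tail_summable.norm, ?_⟩
  rw [log_eq, Complex.ofReal_add, mul_add, ← sub_sub]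
  linarith [norm_sub_le_of_le norm_tsum_sub_le norm_log_two.le, le_abs_self C]

/-- Under the Selberg-orthonormality-type hypotheses on `β1, β2`, there exists `C > 0` such
that for `1/2 < σ ≤ 1` and `2 ≤ Y ≤ exp(1/(2σ−1))` the tail series
`∑_{p > Y} β1(p) conj(β2(p)) / p^{2σ}` converges absolutely and equals
`δ ξ log(1/((σ−1/2) log Y)) + O(1)`. -/
theorem stmt_4 (β1 β2 : ℕ → ℂ) (ξ ξ1 ξ2 : ℝ) (hξ : 0 ≤ ξ) (hξ1 : 0 ≤ ξ1) (hξ2 : 0 ≤ ξ2)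
    (δ : ℝ) (hδ : δ = 0 ∨ δ = 1) (c : ℂ) (A : ℝ) (hA : 0 < A)
    (h12 : ∀ x : ℝ, 3 ≤ x →
      ‖(∑ p ∈ (Finset.range (⌊x⌋₊ + 1)).filter Nat.Prime,
            β1 p * conj (β2 p) / (p : ℂ)) -
          (((δ * ξ * Real.log (Real.log x) : ℝ) : ℂ) + c)‖ ≤ A / Real.log x)
    (h1 : ∀ x : ℝ, 3 ≤ x →
      |(∑ p ∈ (Finset.range (⌊x⌋₊ + 1)).filter Nat.Prime, ‖β1 p‖ ^ 2 / (p : ℝ)) -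
          ξ1 * Real.log (Real.log x)| ≤ A)
    (h2 : ∀ x : ℝ, 3 ≤ x →
      |(∑ p ∈ (Finset.range (⌊x⌋₊ + 1)).filter Nat.Prime, ‖β2 p‖ ^ 2 / (p : ℝ)) -
          ξ2 * Real.log (Real.log x)| ≤ A) :
    ∃ C : ℝ, 0 < C ∧ ∀ σ : ℝ, 1 / 2 < σ → σ ≤ 1 →
      ∀ Y : ℝ, 2 ≤ Y → Y ≤ Real.exp (1 / (2 * σ - 1)) →
      Summable (fun p : Nat.Primes =>
        ‖(if Y < ((p : ℕ) : ℝ) then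
            β1 (p : ℕ) * conj (β2 (p : ℕ)) / (((((p : ℕ) : ℝ) ^ (2 * σ) : ℝ)) : ℂ)
          else 0)‖) ∧
      ‖(∑' p : Nat.Primes,
            if Y < ((p : ℕ) : ℝ) then
              β1 (p : ℕ) * conj (β2 (p : ℕ)) / (((((p : ℕ) : ℝ) ^ (2 * σ) : ℝ)) : ℂ)
            else 0) -
          ((δ * ξ * Real.log (1 / ((σ - 1 / 2) * Real.log Y)) : ℝ) : ℂ)‖ ≤ C := by
  obtain ⟨C, hC, bound⟩ := stmt_4_general (L := δ * ξ)
    (.indicator_prime_of_norm_sub_le (b := 3) fun x hx => by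
      simpa [mul_comm] using (h12 x hx).trans (div_le_self hA.le (one_le_log_of_three_le hx)))
    (.indicator_prime_of_norm_sub_le (c := 0) fun x hx => by simpa [mul_comm] using h1 x hx)
    (.indicator_prime_of_norm_sub_le (c := 0) fun x hx => by simpa [mul_comm] using h2 x hx)
  exact ⟨C, hC, fun σ hσ _ => mod_cast bound σ hσ⟩
end

section
/- There exists an absolute constant C > 0 such that for all real numbers z ≥ 2 and T ≥ 2, every positive integer k with k ≤ log T / log z, and every complex-valued function a on the primes, (1/T) ∫_T^{2T} | ∑_{p ≤ z} a(p) p^{−it} |^{2k} dt ≤ C · k! · ( ∑_{p ≤ z} |a(p)|² )^{k}, where the sums run over primes p ≤ z. -/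
open Finset MeasureTheory

/-! The `k`-th power of the prime sum is a Dirichlet polynomial `∑ c(n) n^{-it}` over products `n`
of `k` primes, all of them at most `z ^ k ≤ T`. By unique factorization `c(n)` is a multinomial
coefficient, at most `k!`, times the product of the `a(p)`, so `∑ |c(n)|² ≤ k! (∑ |a(p)|²) ^ k`.

It remains to bound the mean square of `∑ c(n) n^{-it}` by `∑ |c(n)|²`. The frequencies `log n` with
`n ≤ T` are `1 / T`-separated, so rescaling `t` by `T` makes them `1`-separated and the interval of
length `1`. Translates of a bump function `g` by separated points `v(n)` have disjoint supports, so
the square norm of `∑ c(n) g(x - v(n))` is `∑ |c(n)|²` times that of `g`. Its Fourier transform is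
`𝓕 g` times the exponential sum, and `|𝓕 g|` is at least `1 / 2` near the origin, so Plancherel
gives the bound. -/

lemma norm_sq_sum_of_pairwise_eq_zero {ι E : Type*} [SeminormedAddCommGroup E] {s : Finset ι}
    {x : ι → E} (hx : (s : Set ι).Pairwise fun i j ↦ x i = 0 ∨ x j = 0) :
    ‖∑ i ∈ s, x i‖ ^ 2 = ∑ i ∈ s, ‖x i‖ ^ 2 := by
  by_cases h : ∀ i ∈ s, x i = 0
  · rw [sum_eq_zero h, sum_eq_zero fun i hi ↦ by simp [h i hi], norm_zero, sq, zero_mul]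
  · push Not at h
    obtain ⟨i, hi, hxi⟩ := h
    have hother : ∀ j ∈ s, j ≠ i → x j = 0 := fun j hj hji ↦ (hx hj hi hji).resolve_right hxi
    rw [sum_eq_single_of_mem i hi hother,
      sum_eq_single_of_mem i hi fun j hj hji ↦ by simp [hother j hj hji]]

lemma hasCompactSupport_sum_mul_comp_sub {ι V R : Type*} [TopologicalSpace V] [AddGroup V]
    [IsTopologicalAddGroup V] [NonUnitalNonAssocSemiring R] {g : V → R} (hg : HasCompactSupport g)
    (s : Finset ι) (c : ι → R) (v : ι → V) :
    HasCompactSupport fun x ↦ ∑ i ∈ s, c i * g (x - v i) := by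
  rw [← Finset.sum_fn]
  exact sum_induction _ HasCompactSupport (fun _ _ ↦ .add) .zero fun i _ ↦
    (hg.comp_homeomorph (Homeomorph.subRight (v i))).mul_left

lemma disjoint_support_comp_sub {V M : Type*} [SeminormedAddCommGroup V] [Zero M] {g : V → M}
    {δ : ℝ} (hg : Function.support g ⊆ Metric.ball 0 (δ / 2)) {v w : V} (hvw : δ ≤ dist v w) :
    Disjoint (Function.support fun x ↦ g (x - v)) (Function.support fun x ↦ g (x - w)) := by
  have hsupp (v : V) : (Function.support fun x ↦ g (x - v)) ⊆ Metric.ball v (δ / 2) :=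
    fun x hx ↦ by simpa only [Metric.mem_ball, dist_eq_norm, sub_zero] using hg hx
  exact (Metric.ball_disjoint_ball (by linarith)).mono (hsupp v) (hsupp w)

section Plancherel

open Real Function SchwartzMap
open scoped FourierTransform ContDiff InnerProductSpace

variable {V : Type*} [NormedAddCommGroup V] [InnerProductSpace ℝ V] [FiniteDimensional ℝ V]
  [MeasurableSpace V] [BorelSpace V] {ι : Type*}

lemma fourier_comp_sub (g : V → ℂ) (v ξ : V) :
    𝓕 (fun x ↦ g (x - v)) ξ = 𝐞 (-⟪v, ξ⟫_ℝ) * 𝓕 g ξ := by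
  have h := congrFun (VectorFourier.fourierIntegral_comp_add_right 𝐞 volume (innerₗ V) g (-v)) ξ
  simpa [VectorFourier.fourierIntegral, Real.fourier_eq, sub_eq_add_neg, Circle.smul_def] using h

lemma fourier_sum_mul_comp_sub {g : V → ℂ} (hg : Integrable g) (s : Finset ι) (c : ι → ℂ)
    (v : ι → V) (ξ : V) :
    𝓕 (fun x ↦ ∑ i ∈ s, c i * g (x - v i)) ξ = (∑ i ∈ s, c i * 𝐞 (-⟪v i, ξ⟫_ℝ)) * 𝓕 g ξ := by
  have hint (i : ι) : Integrable fun x ↦ 𝐞 (-⟪x, ξ⟫_ℝ) • (c i * g (x - v i)) :=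
    (Real.fourierIntegral_convergent_iff ξ).2 ((hg.comp_sub_right _).const_mul _)
  rw [Real.fourier_eq, sum_mul]
  simp only [smul_sum]
  rw [integral_finsetSum _ fun i _ ↦ hint i]
  refine sum_congr rfl fun i _ ↦ ?_
  rw [mul_assoc, ← fourier_comp_sub, Real.fourier_eq, ← integral_const_mul]
  simp only [mul_smul_comm]

lemma integral_norm_sq_sum_mul_comp_sub {g : V → ℂ} (hg : MemLp g 2) {s : Finset ι} (c : ι → ℂ)
    {v : ι → V} (hv : (s : Set ι).Pairwise fun i j ↦
      Disjoint (support fun x ↦ g (x - v i)) (support fun x ↦ g (x - v j))) :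
    ∫ x, ‖∑ i ∈ s, c i * g (x - v i)‖ ^ 2 = (∑ i ∈ s, ‖c i‖ ^ 2) * ∫ x, ‖g x‖ ^ 2 := by
  have hdisjoint (x : V) : (s : Set ι).Pairwise fun i j ↦
      c i * g (x - v i) = 0 ∨ c j * g (x - v j) = 0 := fun i hi j hj hij ↦ by
    by_contra! h
    exact Set.disjoint_left.1 (hv hi hj hij) (right_ne_zero_of_mul h.1) (right_ne_zero_of_mul h.2)
  have hint : Integrable fun x ↦ ‖g x‖ ^ 2 := hg.integrable_norm_pow two_ne_zero
  simp only [norm_sq_sum_of_pairwise_eq_zero (hdisjoint _), norm_mul, mul_pow]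
  rw [integral_finsetSum _ fun i _ ↦ (hint.comp_sub_right _).const_mul _, sum_mul]
  simp only [integral_const_mul, integral_sub_right_eq_self fun x ↦ ‖g x‖ ^ 2]

lemma cos_mul_integral_le_norm_fourier {g : V → ℝ} (hg : Integrable g) (hg_nonneg : 0 ≤ g) {r : ℝ}
    (hg_supp : support g ⊆ Metric.closedBall 0 r) {ξ : V} (hξ : 2 * π * (r * ‖ξ‖) ≤ π) :
    cos (2 * π * (r * ‖ξ‖)) * ∫ x, g x ≤ ‖𝓕 (fun x ↦ (g x : ℂ)) ξ‖ := by
  have hint : Integrable fun x ↦ 𝐞 (-⟪x, ξ⟫_ℝ) • (g x : ℂ) :=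
    (Real.fourierIntegral_convergent_iff ξ).2 hg.ofReal
  have hre (x : V) : (𝐞 (-⟪x, ξ⟫_ℝ) • (g x : ℂ)).re = cos (2 * π * ⟪x, ξ⟫_ℝ) * g x := by
    rw [Circle.smul_def, Real.fourierChar_apply, smul_eq_mul, Complex.re_mul_ofReal,
      Complex.exp_ofReal_mul_I_re, mul_neg, cos_neg]
  have hcos (x : V) : cos (2 * π * (r * ‖ξ‖)) * g x ≤ cos (2 * π * ⟪x, ξ⟫_ℝ) * g x := by
    by_cases hx : x ∈ support g
    · refine mul_le_mul_of_nonneg_right ?_ (hg_nonneg x)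
      have hinner : |⟪x, ξ⟫_ℝ| ≤ r * ‖ξ‖ := (abs_real_inner_le_norm x ξ).trans <| by
        gcongr
        exact mem_closedBall_zero_iff.1 (hg_supp hx)
      rw [← cos_abs (2 * π * ⟪x, ξ⟫_ℝ), abs_mul, abs_of_pos two_pi_pos]
      exact cos_le_cos_of_nonneg_of_le_pi (by positivity) hξ (by gcongr)
    · simp [notMem_support.1 hx]
  calc
    _ = ∫ x, cos (2 * π * (r * ‖ξ‖)) * g x := (integral_const_mul _ _).symm
    _ ≤ ∫ x, (𝐞 (-⟪x, ξ⟫_ℝ) • (g x : ℂ)).re := by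
      refine integral_mono (hg.const_mul _) hint.re fun x ↦ ?_
      simpa only [hre] using hcos x
    _ = (𝓕 (fun x ↦ (g x : ℂ)) ξ).re := by
      rw [Real.fourier_eq]
      exact integral_re hint
    _ ≤ _ := Complex.re_le_norm _


lemma exists_contDiff_support_subset_half_le_norm_fourier {r : ℝ} (hr : 0 < r) :
    ∃ g : V → ℂ, ContDiff ℝ ∞ g ∧ HasCompactSupport g ∧ support g ⊆ Metric.ball 0 r ∧
      ∀ ξ : V, r * ‖ξ‖ ≤ 1 / 6 → 1 / 2 ≤ ‖𝓕 g ξ‖ := by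
  let f : ContDiffBump (0 : V) := ⟨r / 2, r, half_pos hr, half_lt_self hr⟩
  have hsupp : support (f.normed volume) = Metric.ball 0 r := f.support_normed_eq
  refine ⟨fun x ↦ (f.normed volume x : ℂ), Complex.ofRealCLM.contDiff.comp f.contDiff_normed,
    f.hasCompactSupport_normed.comp_left Complex.ofReal_zero, fun x hx ↦ ?_, fun ξ hξ ↦ ?_⟩
  · rw [← hsupp]
    exact fun h ↦ hx (by simp [h])
  · have hangle : 2 * π * (r * ‖ξ‖) ≤ π / 3 := by nlinarith [pi_pos]
    calc
      1 / 2 = cos (π / 3) := cos_pi_div_three.symm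
      _ ≤ cos (2 * π * (r * ‖ξ‖)) :=
        cos_le_cos_of_nonneg_of_le_pi (by positivity) (by linarith [pi_pos]) hangle
      _ = cos (2 * π * (r * ‖ξ‖)) * ∫ x, f.normed volume x := by rw [f.integral_normed, mul_one]
      _ ≤ _ := cos_mul_integral_le_norm_fourier f.integrable_normed f.nonneg_normed
        (hsupp.subset.trans Metric.ball_subset_closedBall) (by linarith [pi_pos])

lemma exists_setIntegral_norm_sq_sum_fourierChar_le {δ : ℝ} (hδ : 0 < δ) :
    ∃ C : ℝ, 0 < C ∧ ∀ {ι : Type*} (s : Finset ι) (c : ι → ℂ) (v : ι → V),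
      (s : Set ι).Pairwise (fun i j ↦ δ ≤ dist (v i) (v j)) →
      ∫ ξ in Metric.closedBall (0 : V) (1 / (3 * δ)), ‖∑ i ∈ s, c i * 𝐞 (-⟪v i, ξ⟫_ℝ)‖ ^ 2 ≤
        C * ∑ i ∈ s, ‖c i‖ ^ 2 := by
  obtain ⟨g, hg, hg_compact, hg_supp, hg_fourier⟩ :=
    exists_contDiff_support_subset_half_le_norm_fourier (V := V) (half_pos hδ)
  refine ⟨4 * (∫ x, ‖g x‖ ^ 2) + 1, by positivity, fun {ι} s c v hv ↦ ?_⟩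
  have hg_memLp : MemLp g 2 := hg.continuous.memLp_of_hasCompactSupport hg_compact
  have hdisjoint : (s : Set ι).Pairwise fun i j ↦
      Disjoint (support fun x ↦ g (x - v i)) (support fun x ↦ g (x - v j)) :=
    fun i hi j hj hij ↦ disjoint_support_comp_sub hg_supp (hv hi hj hij)
  have hG : ContDiff ℝ ∞ fun x ↦ ∑ i ∈ s, c i * g (x - v i) := by fun_prop
  let G : 𝓢(V, ℂ) := (hasCompactSupport_sum_mul_comp_sub hg_compact s c v).toSchwartzMap hG
  have hG_fourier (ξ : V) : 𝓕 G ξ = (∑ i ∈ s, c i * 𝐞 (-⟪v i, ξ⟫_ℝ)) * 𝓕 g ξ :=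
    fourier_sum_mul_comp_sub (hg.continuous.integrable_of_hasCompactSupport hg_compact) s c v ξ
  have hG_int : Integrable fun ξ ↦ 4 * ‖𝓕 G ξ‖ ^ 2 :=
    (((𝓕 G).memLp 2).integrable_norm_pow two_ne_zero).const_mul 4
  calc
    _ ≤ ∫ ξ in Metric.closedBall (0 : V) (1 / (3 * δ)), 4 * ‖𝓕 G ξ‖ ^ 2 := by
      have hcont : Continuous fun ξ ↦ ‖∑ i ∈ s, c i * 𝐞 (-⟪v i, ξ⟫_ℝ)‖ ^ 2 := by fun_prop
      refine setIntegral_mono_on (hcont.continuousOn.integrableOn_compact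
        (isCompact_closedBall _ _)) hG_int.integrableOn measurableSet_closedBall fun ξ hξ ↦ ?_
      have hhalf : 1 / 2 ≤ ‖𝓕 g ξ‖ := hg_fourier ξ <| by
        have hξ' := mem_closedBall_zero_iff.1 hξ
        calc δ / 2 * ‖ξ‖ ≤ δ / 2 * (1 / (3 * δ)) := by gcongr
          _ = 1 / 6 := by field_simp; norm_num
      rw [hG_fourier, norm_mul, mul_pow]
      have hquarter : 1 ≤ 4 * ‖𝓕 g ξ‖ ^ 2 := by nlinarith
      nlinarith [sq_nonneg ‖∑ i ∈ s, c i * (𝐞 (-⟪v i, ξ⟫_ℝ) : ℂ)‖]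
    _ ≤ ∫ ξ, 4 * ‖𝓕 G ξ‖ ^ 2 :=
      setIntegral_le_integral hG_int (.of_forall fun ξ ↦ by positivity)
    _ = 4 * ∫ x, ‖G x‖ ^ 2 := by rw [integral_const_mul, G.integral_norm_sq_fourier]
    _ = 4 * ((∑ i ∈ s, ‖c i‖ ^ 2) * ∫ x, ‖g x‖ ^ 2) :=
      congrArg _ (integral_norm_sq_sum_mul_comp_sub hg_memLp c hdisjoint)
    _ ≤ _ := by linarith [sum_nonneg fun i (_ : i ∈ s) ↦ sq_nonneg ‖c i‖]

end Plancherel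

section MeanValue

open Complex
open scoped Real FourierTransform

lemma exists_integral_norm_sq_exp_sum_le_of_one_le_abs_sub :
    ∃ C : ℝ, 0 < C ∧ ∀ {ι : Type*} (s : Finset ι) (c : ι → ℂ) (φ : ι → ℝ),
      (s : Set ι).Pairwise (fun i j ↦ 1 ≤ |φ i - φ j|) →
      ∫ t in (-1 / 2 : ℝ)..1 / 2, ‖∑ i ∈ s, c i * exp (-(I * t) * φ i)‖ ^ 2 ≤
        C * ∑ i ∈ s, ‖c i‖ ^ 2 := by
  obtain ⟨C, hC, hsieve⟩ := exists_setIntegral_norm_sq_sum_fourierChar_le (V := ℝ)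
    (inv_pos.2 Real.two_pi_pos)
  refine ⟨C, hC, fun {ι} s c φ hφ ↦ ?_⟩
  have hchar (t : ℝ) (i : ι) :
      (𝐞 (-inner ℝ ((2 * π)⁻¹ * φ i) t) : ℂ) = exp (-(I * t) * φ i) := by
    rw [Real.fourierChar_apply, RCLike.inner_apply, conj_trivial]
    congr 1
    push_cast
    field_simp
  have hseparated : (s : Set ι).Pairwise fun i j ↦
      (2 * π)⁻¹ ≤ dist ((2 * π)⁻¹ * φ i) ((2 * π)⁻¹ * φ j) := fun i hi j hj hij ↦ by
    beta_reduce
    rw [Real.dist_eq, ← mul_sub, abs_mul, abs_of_pos (inv_pos.2 Real.two_pi_pos)]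
    exact le_mul_of_one_le_right (by positivity) (hφ hi hj hij)
  have hradius : 1 / 2 ≤ 1 / (3 * (2 * π)⁻¹) := by
    field_simp
    linarith [Real.pi_gt_three]
  have hsubset : Set.Ioc (-1 / 2) (1 / 2) ⊆ Metric.closedBall (0 : ℝ) (1 / (3 * (2 * π)⁻¹)) :=
    fun t ht ↦ by
      rw [mem_closedBall_zero_iff, Real.norm_eq_abs, abs_le]
      constructor <;> linarith [ht.1, ht.2]
  have hbound := hsieve s c _ hseparated
  simp only [hchar] at hbound
  have hcont : Continuous fun t : ℝ ↦ ‖∑ i ∈ s, c i * exp (-(I * t) * φ i)‖ ^ 2 := by fun_prop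
  rw [intervalIntegral.integral_of_le (by norm_num)]
  refine (setIntegral_mono_set ?_ (.of_forall fun _ ↦ by positivity) hsubset.eventuallyLE).trans
    hbound
  exact hcont.continuousOn.integrableOn_compact (isCompact_closedBall _ _)

lemma exists_integral_norm_sq_exp_sum_le :
    ∃ C : ℝ, 0 < C ∧ ∀ {ι : Type*} (s : Finset ι) (c : ι → ℂ) (φ : ι → ℝ) (u T : ℝ), 0 < T →
      (s : Set ι).Pairwise (fun i j ↦ T⁻¹ ≤ |φ i - φ j|) →
      (1 / T) * ∫ t in u..u + T, ‖∑ i ∈ s, c i * exp (-(I * t) * φ i)‖ ^ 2 ≤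
        C * ∑ i ∈ s, ‖c i‖ ^ 2 := by
  obtain ⟨C, hC, hunit⟩ := exists_integral_norm_sq_exp_sum_le_of_one_le_abs_sub
  refine ⟨C, hC, fun {ι} s c φ u T hT hφ ↦ ?_⟩
  let F (t : ℝ) : ℝ := ‖∑ i ∈ s, c i * exp (-(I * t) * φ i)‖ ^ 2
  -- Centring the interval at the origin only rotates the coefficients.
  let d (i : ι) : ℂ := c i * exp ((-((u + T / 2) * φ i) : ℝ) * I)
  have hd (i : ι) : ‖d i‖ = ‖c i‖ := by rw [norm_mul, norm_exp_ofReal_mul_I, mul_one]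
  have hseparated : (s : Set ι).Pairwise fun i j ↦ 1 ≤ |T * φ i - T * φ j| :=
    fun i hi j hj hij ↦ by
      beta_reduce
      rw [← mul_sub, abs_mul, abs_of_pos hT]
      exact (inv_le_iff_one_le_mul₀' hT).1 (hφ hi hj hij)
  have hphase (t : ℝ) (i : ι) :
      c i * exp (-(I * (T * t + (u + T / 2) : ℝ)) * φ i) =
        d i * exp (-(I * t) * (T * φ i : ℝ)) := by
    rw [mul_assoc, ← Complex.exp_add]
    push_cast
    ring_nf
  calc
    (1 / T) * ∫ t in u..u + T, F t = ∫ t in -1 / 2..1 / 2, F (T * t + (u + T / 2)) := by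
      rw [intervalIntegral.integral_comp_mul_add _ hT.ne', smul_eq_mul, one_div]
      congr 2 <;> ring
    _ = ∫ t in -1 / 2..1 / 2, ‖∑ i ∈ s, d i * exp (-(I * t) * (T * φ i : ℝ))‖ ^ 2 := by
      simp only [F, hphase]
    _ ≤ C * ∑ i ∈ s, ‖d i‖ ^ 2 := hunit s d _ hseparated
    _ = C * ∑ i ∈ s, ‖c i‖ ^ 2 := by simp only [hd]

lemma abs_sub_div_le_abs_log_sub_log {x y T : ℝ} (hx : 0 < x) (hy : 0 < y) (hxT : x ≤ T)
    (hyT : y ≤ T) : |x - y| / T ≤ |Real.log x - Real.log y| := by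
  wlog hyx : y ≤ x generalizing x y
  · rw [abs_sub_comm, abs_sub_comm (Real.log x)]
    exact this hy hx hyT hxT (le_of_not_ge hyx)
  calc
    |x - y| / T ≤ |x - y| / x := by gcongr
    _ = 1 - (x / y)⁻¹ := by
      rw [abs_of_nonneg (sub_nonneg.2 hyx)]
      field_simp
    _ ≤ Real.log (x / y) := Real.one_sub_inv_le_log_of_pos (div_pos hx hy)
    _ = Real.log x - Real.log y := Real.log_div hx.ne' hy.ne'
    _ ≤ |Real.log x - Real.log y| := le_abs_self _

lemma inv_le_abs_log_natCast_sub_log_natCast {m n : ℕ} (hm : m ≠ 0) (hn : n ≠ 0) (hmn : m ≠ n)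
    {T : ℝ} (hmT : m ≤ T) (hnT : n ≤ T) : T⁻¹ ≤ |Real.log m - Real.log n| := by
  have hm0 : (0 : ℝ) < m := by positivity
  have hdist : (1 : ℝ) ≤ |(m : ℝ) - n| := by
    exact_mod_cast Int.one_le_abs (sub_ne_zero.2 (Nat.cast_injective.ne hmn : (m : ℤ) ≠ n))
  calc
    T⁻¹ = 1 / T := (one_div T).symm
    _ ≤ |(m : ℝ) - n| / T := div_le_div_of_nonneg_right hdist (hm0.le.trans hmT)
    _ ≤ _ := abs_sub_div_le_abs_log_sub_log hm0 (by positivity) hmT hnT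

lemma exists_integral_norm_sq_dirichlet_polynomial_le :
    ∃ C : ℝ, 0 < C ∧ ∀ {ι : Type*} (s : Finset ι) (c : ι → ℂ) (N : ι → ℕ) (u T : ℝ), 0 < T →
      Set.InjOn N s → (∀ i ∈ s, N i ≠ 0) → (∀ i ∈ s, N i ≤ T) →
      (1 / T) * ∫ t in u..u + T, ‖∑ i ∈ s, c i * exp (-(I * t) * Real.log (N i))‖ ^ 2 ≤
        C * ∑ i ∈ s, ‖c i‖ ^ 2 := by
  obtain ⟨C, hC, hmean⟩ := exists_integral_norm_sq_exp_sum_le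
  exact ⟨C, hC, fun s c N u T hT hN hN_ne hNT ↦ hmean s c _ u T hT fun i hi j hj hij ↦
    inv_le_abs_log_natCast_sub_log_natCast (hN_ne i hi) (hN_ne j hj)
      (fun h ↦ hij (hN hi hj h)) (hNT i hi) (hNT j hj)⟩

end MeanValue

section Moments

open Complex

lemma countPerms_le_factorial_card {α : Type*} [DecidableEq α] (m : Multiset α) :
    m.countPerms ≤ m.card.factorial := by
  calc
    m.countPerms ≤ (m.toFinsupp.sum fun _ ↦ id).factorial := Nat.div_le_self _ _
    _ = _ := by rw [Multiset.toFinsupp_sum_eq]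

lemma sum_sym_norm_sq_countPerms_mul_prod_le {α 𝕜 : Type*} [DecidableEq α] [NormedField 𝕜]
    (s : Finset α) (a : α → 𝕜) (k : ℕ) :
    ∑ m ∈ s.sym k, ‖(m.val.countPerms : 𝕜) * (m.val.map a).prod‖ ^ 2 ≤
      k.factorial * (∑ x ∈ s, ‖a x‖ ^ 2) ^ k := by
  rw [Finset.sum_pow, mul_sum]
  refine sum_le_sum fun m _ ↦ ?_
  have hnorm_prod : ‖(m.val.map a).prod‖ ^ 2 = (m.val.map fun x ↦ ‖a x‖ ^ 2).prod := by
    rw [Multiset.prod_map_pow]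
    congr 1
    simpa using map_multiset_prod (normHom : 𝕜 →*₀ ℝ) (m.val.map a)
  have hnorm_countPerms : ‖(m.val.countPerms : 𝕜)‖ ≤ m.val.countPerms := by
    simpa using Nat.norm_cast_le (α := 𝕜) m.val.countPerms
  have hfactorial : (m.val.countPerms : ℝ) ≤ k.factorial := by
    have hcard := countPerms_le_factorial_card m.val
    rw [m.2] at hcard
    exact_mod_cast hcard
  calc
    _ ≤ (m.val.countPerms : ℝ) ^ 2 * ‖(m.val.map a).prod‖ ^ 2 := by
      rw [norm_mul, mul_pow]
      gcongr
    _ ≤ k.factorial * m.val.countPerms * ‖(m.val.map a).prod‖ ^ 2 := by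
      rw [sq (m.val.countPerms : ℝ)]
      gcongr
    _ = _ := by rw [hnorm_prod, mul_assoc]

lemma injOn_prod_of_prime {M : Type*} [CommMonoidWithZero M] [IsCancelMulZero M]
    [Subsingleton Mˣ] : Set.InjOn Multiset.prod {m : Multiset M | ∀ p ∈ m, Prime p} :=
  fun m hm l hl h ↦ by
    classical
    simpa only [associated_eq_eq, Multiset.rel_eq] using prime_factors_unique hm hl (.of_eq h)

lemma prod_map_exp_mul_log {m : Multiset ℕ} (hm : 0 ∉ m) (w : ℂ) :
    (m.map fun n : ℕ ↦ exp (w * Real.log n)).prod = exp (w * Real.log m.prod) := by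
  induction m using Multiset.induction with
  | empty => simp
  | cons n m ih =>
    obtain ⟨hn, hm⟩ : 0 ≠ n ∧ 0 ∉ m := by simpa using hm
    have hn' : (n : ℝ) ≠ 0 := Nat.cast_ne_zero.2 hn.symm
    have hprod : (m.prod : ℝ) ≠ 0 := Nat.cast_ne_zero.2 (Multiset.prod_ne_zero hm)
    rw [Multiset.map_cons, Multiset.prod_cons, ih hm, Multiset.prod_cons, Nat.cast_mul,
      Real.log_mul hn' hprod, ofReal_add, mul_add, Complex.exp_add]

lemma sum_mul_exp_mul_log_pow {s : Finset ℕ} (hs : 0 ∉ s) (a : ℕ → ℂ) (w : ℂ) (k : ℕ) :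
    (∑ n ∈ s, a n * exp (w * Real.log n)) ^ k =
      ∑ m ∈ s.sym k, m.val.countPerms * (m.val.map a).prod * exp (w * Real.log m.val.prod) := by
  rw [Finset.sum_pow]
  refine sum_congr rfl fun m hm ↦ ?_
  rw [Multiset.prod_map_mul, prod_map_exp_mul_log fun h ↦ hs (mem_sym_iff.1 hm 0 h), mul_assoc]

lemma natFloor_pow_le_of_le_log_div_log {z T : ℝ} (hz : 1 < z) (hT : 0 < T) {k : ℕ}
    (hk : k ≤ Real.log T / Real.log z) : (⌊z⌋₊ : ℝ) ^ k ≤ T := by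
  rw [Real.log_div_log, Real.le_logb_iff_rpow_le hz hT, Real.rpow_natCast] at hk
  exact (pow_le_pow_left₀ (Nat.cast_nonneg _) (Nat.floor_le (by linarith)) k).trans hk

theorem stmt_7_general :
    ∃ C : ℝ, 0 < C ∧ ∀ (P : Finset ℕ) (N k : ℕ) (u T : ℝ) (a : ℕ → ℂ),
      (∀ p ∈ P, p.Prime) → (∀ p ∈ P, p ≤ N) → 0 < T → (N : ℝ) ^ k ≤ T →
      (1 / T) * ∫ t in u..u + T, ‖∑ p ∈ P, a p * exp (-(I * t) * Real.log p)‖ ^ (2 * k) ≤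
        C * k.factorial * (∑ p ∈ P, ‖a p‖ ^ 2) ^ k := by
  obtain ⟨C, hC, hmean⟩ := exists_integral_norm_sq_dirichlet_polynomial_le
  refine ⟨C, hC, fun P N k u T a hprime hle hT hNT ↦ ?_⟩
  have h0 : 0 ∉ P := fun h ↦ Nat.not_prime_zero (hprime 0 h)
  have hinj : Set.InjOn (fun m : Sym ℕ k ↦ m.val.prod) (P.sym k) := fun m hm l hl h ↦
    Subtype.ext <| injOn_prod_of_prime (fun p hp ↦ (hprime p (mem_sym_iff.1 hm p hp)).prime)
      (fun p hp ↦ (hprime p (mem_sym_iff.1 hl p hp)).prime) h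
  have hprod_ne : ∀ m ∈ P.sym k, m.val.prod ≠ 0 := fun m hm ↦
    Multiset.prod_ne_zero fun h ↦ h0 (mem_sym_iff.1 hm 0 h)
  have hprod_le : ∀ m ∈ P.sym k, (m.val.prod : ℝ) ≤ T := fun m hm ↦ by
    have h := Multiset.prod_le_pow_card m.val N fun p hp ↦ hle p (mem_sym_iff.1 hm p hp)
    rw [m.2] at h
    exact le_trans (by exact_mod_cast h) hNT
  calc
    _ = (1 / T) * ∫ t in u..u + T, ‖∑ m ∈ P.sym k,
        m.val.countPerms * (m.val.map a).prod * exp (-(I * t) * Real.log m.val.prod)‖ ^ 2 := by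
      simp only [mul_comm 2 k, pow_mul, ← norm_pow, sum_mul_exp_mul_log_pow h0]
    _ ≤ C * ∑ m ∈ P.sym k, ‖m.val.countPerms * (m.val.map a).prod‖ ^ 2 :=
      hmean _ _ _ u T hT hinj hprod_ne hprod_le
    _ ≤ C * (k.factorial * (∑ p ∈ P, ‖a p‖ ^ 2) ^ k) := by
      gcongr
      exact sum_sym_norm_sq_countPerms_mul_prod_le P a k
    _ = _ := (mul_assoc _ _ _).symm

end Moments

/-- There is an absolute constant `C > 0` such that for all `z, T ≥ 2`, every positive
integer `k ≤ log T / log z`, and every complex-valued `a`,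
`(1/T) ∫_T^{2T} |∑_{p ≤ z} a(p) p^{−it}|^{2k} dt ≤ C k! (∑_{p ≤ z} |a(p)|²)^k`. -/
theorem stmt_7 :
    ∃ C : ℝ, 0 < C ∧ ∀ z T : ℝ, 2 ≤ z → 2 ≤ T → ∀ k : ℕ, 1 ≤ k →
      (k : ℝ) ≤ Real.log T / Real.log z → ∀ a : ℕ → ℂ,
      (1 / T) * ∫ t in T..(2 * T),
          ‖∑ p ∈ (Finset.range (⌊z⌋₊ + 1)).filter Nat.Prime,
              a p * Complex.exp (-(Complex.I * (t : ℂ)) * (Real.log p : ℂ))‖ ^ (2 * k) ≤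
        C * (k.factorial : ℝ) *
          (∑ p ∈ (Finset.range (⌊z⌋₊ + 1)).filter Nat.Prime, ‖a p‖ ^ 2) ^ k := by
  obtain ⟨C, hC, hmoment⟩ := stmt_7_general
  refine ⟨C, hC, fun z T hz hT k _ hk a ↦ ?_⟩
  rw [two_mul T]
  exact hmoment _ ⌊z⌋₊ k T T a (fun p hp ↦ (mem_filter.1 hp).2)
    (fun p hp ↦ mem_range_succ_iff.1 (mem_filter.1 hp).1) (by linarith)
    (natFloor_pow_le_of_le_log_div_log (by linarith) (by linarith) hk)
end

section
/- Let Δ > 0 and let a < b be real numbers, I = [a, b]. Define, for x ∈ ℝ: K(x) := (sin(πx)/(πx))² (with K(0) = 1), H(x) := (sin(πx)/π)² · ( 2/x + ∑_{n=1}^∞ ( 1/(x−n)² − 1/(x+n)² ) ), B⁻(x) := H(x) − K(x), and F(x) := (1/2)·( B⁻(Δ(x − a)) + B⁻(Δ(b − x)) ). Then: (i) for almost every x ∈ ℝ one has |F(x)| ≤ 1 and 0 ≤ 1_I(x) − F(x) ≤ K(Δ(x − a)) + K(Δ(b − x)); (ii) F is Lebesgue integrable on ℝ and its Fourier transform F̂(y)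 := ∫_ℝ F(x) e^{−2πixy} dx satisfies F̂(y) = 0 for every real y with |y| ≥ Δ; (iii) there is an absolute constant C > 0 such that |F̂(y) − 1̂_I(y)| ≤ C/Δ for every real y with |y| < Δ, where 1̂_I(y) := ∫_a^b e^{−2πixy} dx. -/
open MeasureTheory

/-- The Fejér kernel `K(x) = (sin(πx)/(πx))²`, with `K(0) = 1`. -/
noncomputable def BSK (x : ℝ) : ℝ :=
  if x = 0 then 1 else (Real.sin (Real.pi * x) / (Real.pi * x)) ^ 2

/-- Beurling's function
`H(x) = (sin(πx)/π)² (2/x + ∑_{n ≥ 1} (1/(x−n)² − 1/(x+n)²))`. -/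
noncomputable def BSH (x : ℝ) : ℝ :=
  (Real.sin (Real.pi * x) / Real.pi) ^ 2 *
    (2 / x + ∑' n : ℕ, (1 / (x - (n + 1 : ℕ)) ^ 2 - 1 / (x + (n + 1 : ℕ)) ^ 2))

/-- The Beurling minorant `B⁻(x) = H(x) − K(x)` of `sgn(x)`. -/
noncomputable def BSBminus (x : ℝ) : ℝ := BSH x - BSK x

/-- The Beurling–Selberg minorant `F(x) = (B⁻(Δ(x−a)) + B⁻(Δ(b−x)))/2` of the indicator
function of `[a, b]`. -/
noncomputable def BSF (Δ a b x : ℝ) : ℝ :=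
  (1 / 2) * (BSBminus (Δ * (x - a)) + BSBminus (Δ * (b - x)))

/-!
Parseval's identity for `t ↦ exp (-2πixt)` on `[-1/2, 1/2]` gives `∑ₙ K(x + n) = 1`. Away from the
integers this turns `H(x)` into `2xK(x) + ∑_{n ≥ 1} (K(x - n) - K(x + n))`, which for `x > 0` equals
`1 - (1 - 2g(x)) K(x)` with `0 ≤ g ≤ 1/2`; hence `|sgn - H| ≤ K`, and averaging the two translates
gives `0 ≤ 1_I - F ≤ K(Δ(x - a)) + K(Δ(b - x))`. The lower bound `F ≥ -1` is finer: outside `I`, the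
values `B⁻(-t)` and `B⁻(v)` with `0 < t ≤ v` are played against each other, using that `g` increases
on `(0, 1]`.

The partial sums of the series for `B⁻` are Fourier transforms of integrable functions supported in
`[-1, 1]`, and they are bounded by `2`. Dominated convergence against Schwartz functions vanishing
on `[-Δ, Δ]` passes the support condition to the limit `F`, whose Fourier transform is continuous
and hence vanishes also at `±Δ`. Finally `|F̂ - 1̂_I|` is at most the `L¹` distance of `F` and
`1_I`, which is at most `2/Δ` because `∫ K = 1`.
-/

open Filter Topology
open scoped FourierTransform RealInnerProductSpace Convolution ContDiff SchwartzMap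

section FejerKernel

lemma BSK_eq_sinc_sq (x : ℝ) : BSK x = Real.sinc (Real.pi * x) ^ 2 := by
  by_cases hx : x = 0 <;> simp [BSK, Real.sinc, hx, Real.pi_ne_zero]

lemma BSK_neg (x : ℝ) : BSK (-x) = BSK x := by
  simp only [BSK_eq_sinc_sq, mul_neg, Real.sinc_neg]

lemma BSK_nonneg (x : ℝ) : 0 ≤ BSK x := by
  rw [BSK_eq_sinc_sq]
  positivity

lemma BSK_le_one (x : ℝ) : BSK x ≤ 1 := by
  rw [BSK_eq_sinc_sq, sq_le_one_iff_abs_le_one]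
  exact Real.abs_sinc_le_one _

lemma continuous_BSK : Continuous BSK := by
  simp only [funext BSK_eq_sinc_sq]
  exact (Real.continuous_sinc.comp (continuous_const_mul _)).pow 2

lemma sq_mul_BSK (x : ℝ) : x ^ 2 * BSK x = (Real.sin (Real.pi * x) / Real.pi) ^ 2 := by
  by_cases hx : x = 0
  · simp [hx]
  · rw [BSK, if_neg hx]
    field_simp

lemma sq_mul_BSK_add_int (x : ℝ) (n : ℤ) : (x + n) ^ 2 * BSK (x + n) = x ^ 2 * BSK x := by
  rw [sq_mul_BSK, sq_mul_BSK, mul_add, mul_comm Real.pi n, Real.sin_add_int_mul_pi, mul_div_assoc,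
    mul_pow, ← sq_abs, abs_neg_one_zpow, one_pow, one_mul]

lemma sq_mul_BSK_le (x : ℝ) : x ^ 2 * BSK x ≤ 1 / 9 := by
  rw [sq_mul_BSK, div_pow, div_le_div_iff₀ (by positivity) (by positivity)]
  nlinarith [Real.sin_sq_le_one (Real.pi * x), Real.pi_gt_three]

lemma integrable_BSK : Integrable BSK := by
  refine (integrable_inv_one_add_sq.const_mul 2).mono' continuous_BSK.aestronglyMeasurable
    (.of_forall fun x => ?_)
  rw [Real.norm_of_nonneg (BSK_nonneg x), ← div_eq_mul_inv, le_div_iff₀ (by positivity)]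
  linarith [sq_mul_BSK_le x, BSK_le_one x]

lemma integral_exp_eq_sinc (x : ℝ) :
    ∫ t in (-(1 / 2) : ℝ)..1 / 2, Complex.exp ((2 * Real.pi * x * t : ℝ) * Complex.I) =
      Real.sinc (Real.pi * x) := by
  rcases eq_or_ne x 0 with rfl | hx
  · norm_num
  have hc : (2 * Real.pi * x * Complex.I : ℂ) ≠ 0 := by simp [hx, Real.pi_ne_zero]
  calc ∫ t in (-(1 / 2) : ℝ)..1 / 2, Complex.exp ((2 * Real.pi * x * t : ℝ) * Complex.I)
      = ∫ t in (-(1 / 2) : ℝ)..1 / 2, Complex.exp (2 * Real.pi * x * Complex.I * t) := by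
        simp only [Complex.ofReal_mul, Complex.ofReal_ofNat, mul_right_comm _ Complex.I]
    _ = Real.sinc (Real.pi * x) := by
        have hupper : 2 * Real.pi * x * Complex.I * (1 / 2 : ℝ) = Real.pi * x * Complex.I := by
          push_cast
          ring
        have hlower : 2 * Real.pi * x * Complex.I * (-(1 / 2) : ℝ) =
            -(Real.pi * x) * Complex.I := by
          push_cast
          ring
        rw [integral_exp_mul_complex hc, Real.sinc_of_ne_zero (mul_ne_zero Real.pi_ne_zero hx),
          hupper, hlower]
        push_cast
        rw [Complex.sin]
        field_simp
        rw [Complex.I_sq]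
        ring

lemma hasSum_BSK_add_int (x : ℝ) : HasSum (fun n : ℤ => BSK (x + n)) 1 := by
  have hI : (-(1 / 2) : ℝ) < 1 / 2 := by norm_num
  let e : ℝ → ℂ := fun t => Complex.exp ((2 * Real.pi * -x * t : ℝ) * Complex.I)
  have norm_e (t : ℝ) : ‖e t‖ = 1 := Complex.norm_exp_ofReal_mul_I _
  have he : MemLp e 2 (volume.restrict (Set.Ioc (-(1 / 2)) (1 / 2))) :=
    .of_bound (by fun_prop) 1 (.of_forall fun t => (norm_e t).le)
  have coeff (n : ℤ) : fourierCoeffOn hI e n = Real.sinc (Real.pi * (-(x + n))) := by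
    rw [fourierCoeffOn_eq_integral, ← integral_exp_eq_sinc, sub_neg_eq_add, add_halves, div_one,
      one_smul]
    refine intervalIntegral.integral_congr fun t _ => ?_
    simp only [e, smul_eq_mul]
    rw [fourier_coe_apply, ← Complex.exp_add]
    push_cast
    ring_nf
  have parseval := hasSum_sq_fourierCoeffOn hI he
  simp only [coeff, norm_e, Complex.norm_real, Real.norm_eq_abs, sq_abs, ← BSK_eq_sinc_sq,
    BSK_neg] at parseval
  convert! parseval using 1
  norm_num

lemma integral_BSK : ∫ x, BSK x = 1 := by
  have hint (n : ℤ) : IntervalIntegrable (fun x => BSK (x + n)) volume 0 1 :=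
    (continuous_BSK.comp (continuous_add_const _)).intervalIntegrable 0 1
  have hunfold := integrable_BSK.hasSum_intervalIntegral_comp_add_int
  have hswap : HasSum (fun n : ℤ => ∫ x in (0 : ℝ)..1, BSK (x + n))
      (∫ x in (0 : ℝ)..1, ∑' n : ℤ, BSK (x + n)) := by
    simp only [intervalIntegral.integral_of_le zero_le_one] at hunfold ⊢
    refine hasSum_integral_of_summable_integral_norm (fun n => (hint n).1) ?_
    simpa only [Real.norm_of_nonneg (BSK_nonneg _)] using hunfold.summable
  simpa [(hasSum_BSK_add_int _).tsum_eq] using hunfold.unique hswap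

lemma summable_BSK_add_nat (x : ℝ) : Summable fun n : ℕ => BSK (x + (n + 1 : ℕ)) := by
  have hinj : Function.Injective fun n : ℕ => ((n + 1 : ℕ) : ℤ) :=
    Nat.cast_injective.comp (add_left_injective 1)
  simpa [Function.comp_def] using (hasSum_BSK_add_int x).summable.comp_injective hinj

/-- The one-sided periodization `∑_{n ≥ 1} K(x + n)` of the Fejér kernel. -/
noncomputable def fejerTail (x : ℝ) : ℝ := ∑' n : ℕ, BSK (x + (n + 1 : ℕ))

lemma BSK_sub_eq_neg_add (x y : ℝ) : BSK (x - y) = BSK (-x + y) := by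
  rw [← BSK_neg, neg_sub, sub_eq_neg_add]

lemma fejerTail_neg_add_BSK_add_fejerTail (x : ℝ) : fejerTail (-x) + BSK x + fejerTail x = 1 := by
  have hpos (n : ℕ) : BSK (x + ((n + 1 : ℤ) : ℝ)) = BSK (x + (n + 1 : ℕ)) := by push_cast; rfl
  have hneg (n : ℕ) : BSK (x + ((-(n + 1) : ℤ) : ℝ)) = BSK (-x + (n + 1 : ℕ)) := by
    rw [← BSK_sub_eq_neg_add, sub_eq_add_neg]
    push_cast
    rfl
  have hsum := HasSum.of_add_one_of_neg_add_one (f := fun n : ℤ => BSK (x + n))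
    ((summable_BSK_add_nat x).hasSum.congr_fun hpos)
    ((summable_BSK_add_nat (-x)).hasSum.congr_fun hneg)
  have htotal := hsum.unique (hasSum_BSK_add_int x)
  rw [Int.cast_zero, add_zero] at htotal
  rw [fejerTail, fejerTail, ← htotal]
  ring

end FejerKernel

section BeurlingFunction

lemma BSH_neg (x : ℝ) : BSH (-x) = -BSH x := by
  have hterm (n : ℕ) : 1 / (-x - (n + 1 : ℕ)) ^ 2 - 1 / (-x + (n + 1 : ℕ)) ^ 2 =
      -(1 / (x - (n + 1 : ℕ)) ^ 2 - 1 / (x + (n + 1 : ℕ)) ^ 2) := by ring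
  simp only [BSH, hterm, tsum_neg, mul_neg, Real.sin_neg, neg_div, neg_sq, div_neg]
  ring

lemma BSH_eq {x : ℝ} (hx : ∀ n : ℤ, x ≠ n) :
    BSH x = 2 * x * BSK x + (fejerTail (-x) - fejerTail x) := by
  have hx0 : x ≠ 0 := by simpa using hx 0
  have hterm (n : ℤ) : x ^ 2 * BSK x * (1 / (x + n) ^ 2) = BSK (x + n) := by
    have : x + n ≠ 0 := fun h => hx (-n) (by push_cast; linarith)
    rw [← sq_mul_BSK_add_int x n]
    field_simp
  rw [BSH, ← sq_mul_BSK, mul_add, ← tsum_mul_left, fejerTail, fejerTail,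
    ← (summable_BSK_add_nat (-x)).tsum_sub (summable_BSK_add_nat x)]
  congr 1
  · field_simp
  · refine tsum_congr fun n => ?_
    have h₁ := hterm (-(n + 1 : ℕ))
    have h₂ := hterm (n + 1 : ℕ)
    push_cast [← sub_eq_add_neg] at h₁ h₂ ⊢
    rw [mul_sub, h₁, h₂, BSK_sub_eq_neg_add]

lemma hasSum_sub_succ_of_antitone {f : ℕ → ℝ} {l : ℝ} (hf : Antitone f)
    (hl : Tendsto f atTop (𝓝 l)) : HasSum (fun n => f n - f (n + 1)) (f 0 - l) := by
  rw [hasSum_iff_tendsto_nat_of_nonneg fun n => sub_nonneg.2 (hf n.le_succ)]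
  simp only [Finset.sum_range_sub']
  exact tendsto_const_nhds.sub hl

lemma hasSum_one_div_pow_sub_succ {x : ℝ} (hx : 0 < x) {k : ℕ} (hk : k ≠ 0) :
    HasSum (fun n : ℕ => 1 / (x + n) ^ k - 1 / (x + (n + 1 : ℕ)) ^ k) (1 / x ^ k) := by
  have hanti : Antitone fun n : ℕ => 1 / (x + n) ^ k := fun m n h => by
    dsimp only
    gcongr
  have hlim : Tendsto (fun n : ℕ => 1 / (x + n) ^ k) atTop (𝓝 0) := by
    simp only [one_div]
    exact ((tendsto_pow_atTop hk).comp
      (tendsto_atTop_add_const_left _ x tendsto_natCast_atTop_atTop)).inv_tendsto_atTop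
  simpa using hasSum_sub_succ_of_antitone hanti hlim

/-- The function `x - x² ∑_{n ≥ 1} 1/(x + n)²` on `(0, ∞)`, which measures how far `H` is from `1`
there; telescoping `x = x² ∑_{n ≥ 0} (1/(x + n) - 1/(x + n + 1))` turns it into a series of
positive terms. -/
noncomputable def beurlingGap (x : ℝ) : ℝ :=
  ∑' n : ℕ, x / (x + (n + 1 : ℕ)) ^ 2 * (x / (x + n))

lemma beurlingGap_term_le {x : ℝ} (hx : 0 < x) (n : ℕ) :
    x / (x + (n + 1 : ℕ)) ^ 2 * (x / (x + n)) ≤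
      x ^ 2 / 2 * (1 / (x + n) ^ 2 - 1 / (x + (n + 1 : ℕ)) ^ 2) := by
  have hy : 0 < x + n := by positivity
  rw [Nat.cast_succ, ← add_assoc]
  generalize x + (n : ℝ) = y at hy
  have hdiff : x ^ 2 / 2 * (1 / y ^ 2 - 1 / (y + 1) ^ 2) - x / (y + 1) ^ 2 * (x / y) =
      x ^ 2 / (2 * y ^ 2 * (y + 1) ^ 2) := by
    field_simp
    ring
  rw [← sub_nonneg, hdiff]
  positivity

lemma summable_beurlingGap {x : ℝ} (hx : 0 < x) :
    Summable fun n : ℕ => x / (x + (n + 1 : ℕ)) ^ 2 * (x / (x + n)) :=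
  .of_nonneg_of_le (fun n => by positivity) (beurlingGap_term_le hx)
    ((hasSum_one_div_pow_sub_succ hx two_ne_zero).summable.mul_left _)

lemma beurlingGap_nonneg {x : ℝ} (hx : 0 < x) : 0 ≤ beurlingGap x :=
  tsum_nonneg fun n => by positivity

lemma beurlingGap_le_half {x : ℝ} (hx : 0 < x) : beurlingGap x ≤ 1 / 2 := by
  refine (hasSum_le (beurlingGap_term_le hx) (summable_beurlingGap hx).hasSum
    ((hasSum_one_div_pow_sub_succ hx two_ne_zero).mul_left _)).trans_eq ?_
  field_simp

lemma monotoneOn_beurlingGap : MonotoneOn beurlingGap (Set.Ioc 0 1) := by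
  rintro t ⟨ht, -⟩ v ⟨hv, hv1⟩ htv
  refine (summable_beurlingGap ht).tsum_le_tsum (fun n => ?_) (summable_beurlingGap hv)
  have hn : (1 : ℝ) ≤ (n + 1 : ℕ) := by simp
  generalize ((n + 1 : ℕ) : ℝ) = c at hn
  gcongr ?_ * ?_
  · rw [div_le_div_iff₀ (by positivity) (by positivity)]
    have : t * v ≤ c ^ 2 := by nlinarith
    nlinarith [mul_nonneg (sub_nonneg.2 htv) (sub_nonneg.2 this)]
  · rw [div_le_div_iff₀ (by positivity) (by positivity)]
    nlinarith [mul_le_mul_of_nonneg_right htv n.cast_nonneg]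

lemma fejerTail_eq {x : ℝ} (hx : 0 < x) : fejerTail x = BSK x * (x - beurlingGap x) := by
  have hsum := (((hasSum_one_div_pow_sub_succ hx one_ne_zero).mul_left (x ^ 2)).sub
    (summable_beurlingGap hx).hasSum).mul_left (BSK x)
  rw [show x ^ 2 * (1 / x ^ 1) = x by field_simp] at hsum
  refine (tsum_congr fun n => ?_).trans hsum.tsum_eq
  have hterm := sq_mul_BSK_add_int x (n + 1 : ℕ)
  have hy : 0 < x + n := by positivity
  push_cast [← add_assoc] at hterm ⊢
  generalize x + (n : ℝ) = y at hterm hy ⊢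
  rw [eq_div_of_mul_eq (by positivity) ((mul_comm _ _).trans hterm)]
  field_simp
  ring

lemma BSH_of_pos {x : ℝ} (hx : 0 < x) (hn : ∀ n : ℤ, x ≠ n) :
    BSH x = 1 - (1 - 2 * beurlingGap x) * BSK x := by
  linarith [BSH_eq hn, fejerTail_eq hx, fejerTail_neg_add_BSK_add_fejerTail x]

lemma abs_sign_sub_BSH_le {x : ℝ} (hn : ∀ n : ℤ, x ≠ n) : |Real.sign x - BSH x| ≤ BSK x := by
  have of_pos {x : ℝ} (hx : 0 < x) (hn : ∀ n : ℤ, x ≠ n) : |Real.sign x - BSH x| ≤ BSK x := by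
    rw [Real.sign_of_pos hx, BSH_of_pos hx hn, sub_sub_cancel, abs_mul,
      abs_of_nonneg (BSK_nonneg x)]
    refine mul_le_of_le_one_left (BSK_nonneg x) (abs_le.2 ⟨?_, ?_⟩) <;>
      linarith [beurlingGap_nonneg hx, beurlingGap_le_half hx]
  rcases lt_trichotomy x 0 with hx | rfl | hx
  · have h := of_pos (neg_pos.2 hx) fun n h => hn (-n) (by push_cast; linarith)
    rwa [Real.sign_neg, BSH_neg, BSK_neg, ← neg_sub', abs_neg] at h
  · exact absurd Int.cast_zero.symm (hn 0)
  · exact of_pos hx hn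

lemma sign_sub_BSBminus_mem_Icc {x : ℝ} (hn : ∀ n : ℤ, x ≠ n) :
    Real.sign x - BSBminus x ∈ Set.Icc 0 (2 * BSK x) := by
  obtain ⟨hl, hu⟩ := abs_le.1 (abs_sign_sub_BSH_le hn)
  constructor <;> linarith [BSBminus.eq_1 x]

lemma beurlingGap_mul_BSK_add_le_one {t v : ℝ} (ht : 0 < t) (htv : t ≤ v) :
    beurlingGap t * BSK t + (1 - beurlingGap v) * BSK v ≤ 1 := by
  have hv := ht.trans_le htv
  have gt₀ := beurlingGap_nonneg ht
  have gt₁ := beurlingGap_le_half ht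
  have gv₀ := beurlingGap_nonneg hv
  have gv₁ := beurlingGap_le_half hv
  have Kt := mul_le_of_le_one_right gt₀ (BSK_le_one t)
  rcases le_total v 1 with h | h
  · have gap_le := monotoneOn_beurlingGap ⟨ht, htv.trans h⟩ ⟨hv, h⟩ htv
    have Kv := mul_le_of_le_one_right (by linarith : 0 ≤ 1 - beurlingGap v) (BSK_le_one v)
    linarith
  · have Kv : BSK v ≤ 1 / 2 := by nlinarith [sq_mul_BSK_le v, BSK_nonneg v]
    have := mul_le_of_le_one_left (BSK_nonneg v) (by linarith : 1 - beurlingGap v ≤ 1)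
    linarith

lemma neg_two_le_BSBminus_add {u v : ℝ} (huv : 0 ≤ u + v) (hu : ∀ n : ℤ, u ≠ n)
    (hv : ∀ n : ℤ, v ≠ n) : -2 ≤ BSBminus u + BSBminus v := by
  wlog h : u ≤ v generalizing u v
  · rw [add_comm]
    exact this (by rwa [add_comm]) hv hu (le_of_not_ge h)
  rcases lt_trichotomy u 0 with hu₀ | rfl | hu₀
  · obtain ⟨t, rfl⟩ : ∃ t, u = -t := ⟨-u, (neg_neg u).symm⟩
    have ht : 0 < t := neg_lt_zero.1 hu₀
    have hnt (n : ℤ) : t ≠ n := fun h => hu (-n) (by push_cast; linarith)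
    rw [BSBminus, BSBminus, BSH_neg, BSK_neg, BSH_of_pos ht hnt, BSH_of_pos (by linarith) hv]
    linarith [beurlingGap_mul_BSK_add_le_one ht (by linarith : t ≤ v)]
  · exact absurd Int.cast_zero.symm (hu 0)
  · have bound {w : ℝ} (hw : 0 < w) (hn : ∀ n : ℤ, w ≠ n) : -1 ≤ BSBminus w := by
      linarith [(sign_sub_BSBminus_mem_Icc hn).2, Real.sign_of_pos hw, BSK_le_one w]
    linarith [bound hu₀ hu, bound (hu₀.trans_le h) hv]

end BeurlingFunction

section BandLimited

variable {V E : Type*} [NormedAddCommGroup V] [InnerProductSpace ℝ V] [MeasurableSpace V]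
  [BorelSpace V] [FiniteDimensional ℝ V] [NormedAddCommGroup E] [NormedSpace ℂ E]

/-- `f` has bandwidth at most `r`: it is the Fourier transform of an integrable function supported
in the closed ball of radius `r` around `0`. As that ball is symmetric, it makes no difference
whether one takes the Fourier transform or its inverse here. -/
def IsBandLimited (r : ℝ) (f : V → E) : Prop :=
  ∃ w : V → E, Integrable w ∧ Function.support w ⊆ Metric.closedBall 0 r ∧ 𝓕 w = f

namespace IsBandLimited

variable {r s : ℝ} {f g : V → E}

lemma add (hf : IsBandLimited r f) (hg : IsBandLimited r g) : IsBandLimited r (f + g) := by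
  obtain ⟨u, hu, hur, rfl⟩ := hf
  obtain ⟨v, hv, hvr, rfl⟩ := hg
  refine ⟨u + v, hu.add hv, (Function.support_add u v).trans (Set.union_subset hur hvr), ?_⟩
  exact VectorFourier.fourierIntegral_add Real.continuous_fourierChar continuous_inner hu hv

lemma const_smul (c : ℂ) (hf : IsBandLimited r f) : IsBandLimited r (c • f) := by
  obtain ⟨u, hu, hur, rfl⟩ := hf
  exact ⟨c • u, hu.smul c, (Function.support_const_smul_subset c u).trans hur,
    VectorFourier.fourierIntegral_const_smul _ _ _ _ _⟩

lemma sub (hf : IsBandLimited r f) (hg : IsBandLimited r g) : IsBandLimited r (f - g) := by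
  simpa [sub_eq_add_neg] using hf.add (hg.const_smul (-1))

lemma smul [CompleteSpace E] {f : V → ℂ} (hf : IsBandLimited r f) (hg : IsBandLimited s g) :
    IsBandLimited (r + s) (fun x => f x • g x) := by
  obtain ⟨u, hu, hur, rfl⟩ := hf
  obtain ⟨v, hv, hvs, rfl⟩ := hg
  refine ⟨u ⋆[ContinuousLinearMap.lsmul ℂ ℂ] v, hu.integrable_convolution _ hv, ?_,
    funext (Real.fourier_smul_convolution_eq hu hv)⟩
  refine (support_convolution_subset _).trans ((Set.add_subset_add hur hvs).trans ?_)
  rintro _ ⟨x, hx, y, hy, rfl⟩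
  rw [mem_closedBall_zero_iff] at *
  exact (norm_add_le x y).trans (add_le_add hx hy)

lemma fourierChar_smul (hf : IsBandLimited r f) (c : V) :
    IsBandLimited (r + ‖c‖) (fun x => 𝐞 ⟪c, x⟫ • f x) := by
  obtain ⟨u, hu, hur, rfl⟩ := hf
  refine ⟨fun v => u (v + c), hu.comp_add_right c, fun v hv => ?_, ?_⟩
  · have hvc := mem_closedBall_zero_iff.1 (hur hv)
    rw [mem_closedBall_zero_iff]
    calc ‖v‖ = ‖(v + c) - c‖ := by rw [add_sub_cancel_right]
      _ ≤ r + ‖c‖ := (norm_sub_le _ _).trans (by gcongr)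
  · exact VectorFourier.fourierIntegral_comp_add_right _ _ _ u c

lemma comp_add_right (hf : IsBandLimited r f) (c : V) : IsBandLimited r (fun x => f (x + c)) := by
  obtain ⟨u, hu, hur, rfl⟩ := hf
  refine ⟨fun v => 𝐞 (-⟪v, c⟫) • u v, ?_, fun v hv => hur ?_, ?_⟩
  · exact (VectorFourier.fourierIntegral_convergent_iff Real.continuous_fourierChar
      (L := innerₗ V) continuous_inner c).2 hu
  · exact Function.support_smul_subset_right _ _ hv
  · ext x
    simp_rw [Real.fourier_eq, smul_smul, ← AddChar.map_add_eq_mul, inner_add_right, neg_add]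

lemma comp_smul (hf : IsBandLimited r f) {p : ℝ} (hp : p ≠ 0) :
    IsBandLimited (|p| * r) (fun x => f (p • x)) := by
  obtain ⟨u, hu, hur, rfl⟩ := hf
  refine ⟨((|p| ^ Module.finrank ℝ V)⁻¹ : ℝ) • fun v => u (p⁻¹ • v), ?_, fun v hv => ?_, ?_⟩
  · exact (hu.comp_smul (inv_ne_zero hp)).smul _
  · have h := hur (Function.support_const_smul_subset _ _ hv)
    rw [mem_closedBall_zero_iff] at h ⊢
    rwa [norm_smul, norm_inv, Real.norm_eq_abs, inv_mul_le_iff₀ (abs_pos.2 hp)] at h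
  · ext x
    have h := Measure.integral_comp_inv_smul volume (fun v => 𝐞 (-⟪v, p • x⟫) • u v) p
    rw [abs_pow] at h
    simp_rw [Real.fourier_eq, ← inv_smul_eq_iff₀ (pow_ne_zero _ (abs_ne_zero.2 hp))] at h ⊢
    rw [← h, ← integral_smul]
    refine integral_congr_ae (.of_forall fun v => ?_)
    simp only [Pi.smul_apply, inner_smul_left, inner_smul_right, RCLike.conj_to_real]
    rw [mul_inv_cancel_left₀ hp, smul_comm]

lemma comp_smul_sub (hf : IsBandLimited r f) {p : ℝ} (hp : p ≠ 0) (c : V) :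
    IsBandLimited (|p| * r) (fun x => f (p • (x - c))) := by
  simpa only [sub_eq_add_neg] using (hf.comp_smul hp).comp_add_right (-c)

lemma sin_smul (hf : IsBandLimited r f) (c : V) :
    IsBandLimited (r + ‖c‖) (fun x => Real.sin (2 * Real.pi * ⟪c, x⟫) • f x) := by
  convert! ((hf.fourierChar_smul c).sub (norm_neg c ▸ hf.fourierChar_smul (-c))).const_smul
    (1 / (2 * Complex.I)) using 1
  ext x
  simp only [Pi.smul_apply, Pi.sub_apply, Circle.smul_def, Real.fourierChar_apply, ← sub_smul,
    inner_neg_left, smul_smul, ← Complex.coe_smul (E := E)]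
  congr 1
  push_cast
  rw [Complex.sin]
  field_simp
  rw [Complex.I_sq]
  ring_nf

lemma continuous (hf : IsBandLimited r f) : Continuous f := by
  obtain ⟨u, hu, -, rfl⟩ := hf
  exact VectorFourier.fourierIntegral_continuous Real.continuous_fourierChar continuous_inner hu

end IsBandLimited

lemma norm_fourier_sub_le {f g : V → E} (hf : Integrable f) (hg : Integrable g) (y : V) :
    ‖𝓕 f y - 𝓕 g y‖ ≤ ∫ x, ‖f x - g x‖ := by
  have hphase {h : V → E} (hh : Integrable h) : Integrable fun x => 𝐞 (-⟪x, y⟫) • h x :=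
    (VectorFourier.fourierIntegral_convergent_iff Real.continuous_fourierChar
      (L := innerₗ V) continuous_inner y).2 hh
  rw [Real.fourier_eq, Real.fourier_eq, ← integral_sub (hphase hf) (hphase hg)]
  simp only [← smul_sub]
  exact (norm_integral_le_integral_norm _).trans_eq (by simp only [Circle.norm_smul])

lemma integral_fourier_smul_eq [CompleteSpace E] {g : V → ℂ} {f : V → E} (hg : Integrable g)
    (hf : Integrable f) : ∫ x, 𝓕 g x • f x = ∫ x, g x • 𝓕 f x := by
  simpa using! VectorFourier.integral_fourierIntegral_smul_eq_flip (L := innerₗ V)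
    Real.continuous_fourierChar continuous_inner hg hf

lemma IsBandLimited.integral_fourier_smul_eq_zero [CompleteSpace E] {r : ℝ} {f : V → E}
    (hf : IsBandLimited r f) {φ : 𝓢(V, ℂ)} (hφ : ∀ v, ‖v‖ ≤ r → φ v = 0) :
    ∫ x, 𝓕 φ x • f x = 0 := by
  obtain ⟨w, hw, hwr, rfl⟩ := hf
  have double_fourier (v : V) : 𝓕 (𝓕 φ) v = φ (-v) := by
    rw [← DFunLike.congr_fun (FourierTransform.fourierInv_fourier_eq (F := 𝓢(V, ℂ)) φ) (-v),
      SchwartzMap.fourierInv_coe, SchwartzMap.fourier_coe (𝓕 φ), Real.fourierInv_eq_fourier_neg,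
      neg_neg]
  rw [← integral_fourier_smul_eq (𝓕 φ).integrable hw, ← SchwartzMap.fourier_coe]
  refine integral_eq_zero_of_ae (.of_forall fun v => ?_)
  by_cases hv : w v = 0
  · simp [hv]
  · have : φ (-v) = 0 := hφ _ (by simpa using hwr hv)
    simp [double_fourier, this]

lemma integral_smul_fourier_eq_zero_of_tendsto [CompleteSpace E] {r M : ℝ} {f : V → E}
    (hf : Integrable f) {F : ℕ → V → E} (hF : ∀ n, IsBandLimited r (F n))
    (hM : ∀ n x, ‖F n x‖ ≤ M) (hlim : ∀ᵐ x, Tendsto (fun n => F n x) atTop (𝓝 (f x)))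
    {φ : 𝓢(V, ℂ)} (hφ : ∀ v, ‖v‖ ≤ r → φ v = 0) : ∫ x, φ x • 𝓕 f x = 0 := by
  rw [← integral_fourier_smul_eq φ.integrable hf, ← SchwartzMap.fourier_coe]
  refine tendsto_nhds_unique (tendsto_integral_of_dominated_convergence (fun x => ‖𝓕 φ x‖ * M)
    (fun n => ?_) ((𝓕 φ).integrable.norm.mul_const M) (fun n => .of_forall fun x => ?_)
    (hlim.mono fun x hx => hx.const_smul (𝓕 φ x))) ?_
  · exact ((𝓕 φ).continuous.smul (hF n).continuous).aestronglyMeasurable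
  · rw [norm_smul]
    gcongr
    exact hM n x
  · simp only [(hF _).integral_fourier_smul_eq_zero hφ, tendsto_const_nhds]

theorem fourier_eq_zero_of_tendsto_isBandLimited [CompleteSpace E] {r M : ℝ} (hr : r ≠ 0)
    {f : V → E} (hf : Integrable f) {F : ℕ → V → E} (hF : ∀ n, IsBandLimited r (F n))
    (hM : ∀ n x, ‖F n x‖ ≤ M) (hlim : ∀ᵐ x, Tendsto (fun n => F n x) atTop (𝓝 (f x)))
    {y : V} (hy : r ≤ ‖y‖) : 𝓕 f y = 0 := by
  have hcont : Continuous (𝓕 f) := VectorFourier.fourierIntegral_continuous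
    Real.continuous_fourierChar continuous_inner hf
  have hopen : IsOpen (Metric.closedBall (0 : V) r)ᶜ := Metric.isClosed_closedBall.isOpen_compl
  have hae : ∀ᵐ v, v ∈ (Metric.closedBall (0 : V) r)ᶜ → 𝓕 f v = 0 := by
    refine hopen.ae_eq_zero_of_integral_contDiff_smul_eq_zero
      (hcont.locallyIntegrable.locallyIntegrableOn _) fun g hg hgc hgs => ?_
    have hgC : ContDiff ℝ ∞ fun v => (g v : ℂ) := Complex.ofRealCLM.contDiff.comp hg
    let φ : 𝓢(V, ℂ) := (hgc.comp_left Complex.ofReal_zero).toSchwartzMap hgC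
    have hφ (v : V) (hv : ‖v‖ ≤ r) : φ v = 0 := by
      have : v ∉ tsupport g := fun h => hgs h (mem_closedBall_zero_iff.2 hv)
      simp [φ, image_eq_zero_of_notMem_tsupport this]
    simpa [φ] using integral_smul_fourier_eq_zero_of_tendsto hf hF hM hlim hφ
  have hzero : Set.EqOn (𝓕 f) 0 (Metric.closedBall (0 : V) r)ᶜ :=
    Measure.eqOn_open_of_ae_eq ((ae_restrict_iff' hopen.measurableSet).2 hae) hopen
      hcont.continuousOn continuousOn_const
  refine hzero.closure hcont continuous_zero ?_
  rw [closure_compl, interior_closedBall _ hr]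
  simpa using hy

end BandLimited

section Minorant

lemma indicator_Icc_eq_sign_add_sign {Δ a b x : ℝ} (hΔ : 0 < Δ) (hab : a ≤ b) (ha : x ≠ a)
    (hb : x ≠ b) : Set.indicator (Set.Icc a b) (fun _ => (1 : ℝ)) x =
      1 / 2 * (Real.sign (Δ * (x - a)) + Real.sign (Δ * (b - x))) := by
  rw [Set.indicator_apply]
  rcases ha.lt_or_gt with hxa | hxa <;> rcases hb.lt_or_gt with hxb | hxb
  · rw [if_neg fun h => hxa.not_ge h.1, Real.sign_of_neg (by nlinarith),
      Real.sign_of_pos (by nlinarith)]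
    norm_num
  · linarith
  · rw [if_pos ⟨hxa.le, hxb.le⟩, Real.sign_of_pos (by nlinarith), Real.sign_of_pos (by nlinarith)]
    norm_num
  · rw [if_neg fun h => hxb.not_ge h.2, Real.sign_of_pos (by nlinarith),
      Real.sign_of_neg (by nlinarith)]
    norm_num

lemma BSF_bounds {Δ a b x : ℝ} (hΔ : 0 < Δ) (hab : a ≤ b) (ha : ∀ n : ℤ, Δ * (x - a) ≠ n)
    (hb : ∀ n : ℤ, Δ * (b - x) ≠ n) :
    |BSF Δ a b x| ≤ 1 ∧
      0 ≤ Set.indicator (Set.Icc a b) (fun _ => (1 : ℝ)) x - BSF Δ a b x ∧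
      Set.indicator (Set.Icc a b) (fun _ => (1 : ℝ)) x - BSF Δ a b x ≤
        BSK (Δ * (x - a)) + BSK (Δ * (b - x)) := by
  have hxa : x ≠ a := fun h => ha 0 (by simp [h])
  have hxb : x ≠ b := fun h => hb 0 (by simp [h])
  have h₁ := sign_sub_BSBminus_mem_Icc ha
  have h₂ := sign_sub_BSBminus_mem_Icc hb
  have hlow := neg_two_le_BSBminus_add
    (by rw [← mul_add]; nlinarith : 0 ≤ Δ * (x - a) + Δ * (b - x)) ha hb
  have hle : Set.indicator (Set.Icc a b) (fun _ => (1 : ℝ)) x ≤ 1 :=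
    Set.indicator_apply_le' (fun _ => le_rfl) fun _ => zero_le_one
  rw [indicator_Icc_eq_sign_add_sign hΔ hab hxa hxb] at hle ⊢
  rw [BSF, abs_le]
  refine ⟨⟨?_, ?_⟩, ?_, ?_⟩ <;> linarith [h₁.1, h₁.2, h₂.1, h₂.2]

lemma ae_mul_sub_const_ne_intCast {p : ℝ} (hp : p ≠ 0) (c : ℝ) :
    ∀ᵐ x : ℝ, ∀ n : ℤ, p * (x - c) ≠ n := by
  rw [ae_all_iff]
  intro n
  filter_upwards [Measure.ae_ne volume (n / p + c)] with x hx h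
  exact hx (by rw [← h]; field_simp; ring)

lemma ae_mul_const_sub_ne_intCast {p : ℝ} (hp : p ≠ 0) (c : ℝ) :
    ∀ᵐ x : ℝ, ∀ n : ℤ, p * (c - x) ≠ n := by
  simpa only [neg_mul, ← mul_neg, neg_sub] using ae_mul_sub_const_ne_intCast (neg_ne_zero.2 hp) c

lemma BSF_bounds_ae {Δ a b : ℝ} (hΔ : 0 < Δ) (hab : a ≤ b) :
    ∀ᵐ x : ℝ, |BSF Δ a b x| ≤ 1 ∧
      0 ≤ Set.indicator (Set.Icc a b) (fun _ => (1 : ℝ)) x - BSF Δ a b x ∧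
      Set.indicator (Set.Icc a b) (fun _ => (1 : ℝ)) x - BSF Δ a b x ≤
        BSK (Δ * (x - a)) + BSK (Δ * (b - x)) := by
  filter_upwards [ae_mul_sub_const_ne_intCast hΔ.ne' a, ae_mul_const_sub_ne_intCast hΔ.ne' b] with x
  exact BSF_bounds hΔ hab

lemma measurable_BSBminus : Measurable BSBminus := by
  have := continuous_BSK.measurable
  unfold BSBminus BSH
  fun_prop

lemma measurable_BSF (Δ a b : ℝ) : Measurable (BSF Δ a b) := by
  have := measurable_BSBminus
  unfold BSF
  fun_prop

lemma integrable_BSK_comp_add {Δ : ℝ} (hΔ : Δ ≠ 0) (a b : ℝ) :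
    Integrable fun x => BSK (Δ * (x - a)) + BSK (Δ * (b - x)) :=
  ((integrable_BSK.comp_mul_left' hΔ).comp_sub_right a).add
    ((integrable_BSK.comp_mul_left' hΔ).comp_sub_left b)

lemma integral_BSK_comp_add {Δ : ℝ} (hΔ : 0 < Δ) (a b : ℝ) :
    ∫ x, (BSK (Δ * (x - a)) + BSK (Δ * (b - x))) = 2 / Δ := by
  have hint := integrable_BSK.comp_mul_left' hΔ.ne'
  rw [integral_add (hint.comp_sub_right a) (hint.comp_sub_left b),
    integral_sub_right_eq_self (fun x => BSK (Δ * x)) a,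
    integral_sub_left_eq_self (fun x => BSK (Δ * x)) volume b, Measure.integral_comp_mul_left,
    integral_BSK, abs_of_pos (inv_pos.2 hΔ), smul_eq_mul]
  ring

lemma integrable_indicator_sub_BSF {Δ a b : ℝ} (hΔ : 0 < Δ) (hab : a ≤ b) :
    Integrable fun x => Set.indicator (Set.Icc a b) (fun _ => (1 : ℝ)) x - BSF Δ a b x := by
  refine (integrable_BSK_comp_add hΔ.ne' a b).mono' (((measurable_const.indicator
    measurableSet_Icc).sub (measurable_BSF Δ a b)).aestronglyMeasurable) ?_
  filter_upwards [BSF_bounds_ae hΔ hab] with x ⟨_, hnonneg, hle⟩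
  rwa [Real.norm_of_nonneg hnonneg]

lemma integrable_indicator_Icc_one (a b : ℝ) :
    Integrable (Set.indicator (Set.Icc a b) fun _ => (1 : ℝ)) :=
  (integrable_indicator_iff measurableSet_Icc).2 (integrableOn_const (by simp))

lemma integrable_BSF {Δ a b : ℝ} (hΔ : 0 < Δ) (hab : a ≤ b) : Integrable (BSF Δ a b) := by
  simpa [Pi.sub_def] using
    (integrable_indicator_Icc_one a b).sub (integrable_indicator_sub_BSF hΔ hab)

lemma fourier_ofReal_eq_integral (f : ℝ → ℝ) (y : ℝ) :
    𝓕 (fun x => (f x : ℂ)) y =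
      ∫ x, (f x : ℂ) * Complex.exp (((-2) * Real.pi * x * y : ℝ) * Complex.I) := by
  simp only [Real.fourier_real_eq_integral_exp_smul, smul_eq_mul, mul_comm]

lemma fourier_indicator_Icc_one {a b : ℝ} (hab : a ≤ b) (y : ℝ) :
    𝓕 (fun x => ((Set.indicator (Set.Icc a b) (fun _ => (1 : ℝ)) x : ℝ) : ℂ)) y =
      ∫ x in a..b, Complex.exp (((-2) * Real.pi * x * y : ℝ) * Complex.I) := by
  rw [fourier_ofReal_eq_integral, intervalIntegral.integral_of_le hab,
    ← integral_Icc_eq_integral_Ioc, ← integral_indicator measurableSet_Icc]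
  refine integral_congr_ae (.of_forall fun x => ?_)
  by_cases hx : x ∈ Set.Icc a b <;> simp [hx]

lemma norm_fourier_BSF_sub_le {Δ a b : ℝ} (hΔ : 0 < Δ) (hab : a ≤ b) (y : ℝ) :
    ‖(∫ x : ℝ, (BSF Δ a b x : ℂ) * Complex.exp (((-2) * Real.pi * x * y : ℝ) * Complex.I)) -
      ∫ x in a..b, Complex.exp (((-2) * Real.pi * x * y : ℝ) * Complex.I)‖ ≤ 2 / Δ := by
  rw [← fourier_ofReal_eq_integral, ← fourier_indicator_Icc_one hab, norm_sub_rev,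
    ← integral_BSK_comp_add hΔ a b]
  refine (norm_fourier_sub_le (integrable_indicator_Icc_one a b).ofReal
    (integrable_BSF hΔ hab).ofReal y).trans (integral_mono_of_nonneg
    (.of_forall fun x => norm_nonneg _) (integrable_BSK_comp_add hΔ.ne' a b) ?_)
  filter_upwards [BSF_bounds_ae hΔ hab] with x ⟨_, hnonneg, hle⟩
  rwa [← Complex.ofReal_sub, Complex.norm_real, Real.norm_of_nonneg hnonneg]

/-- The partial sums of the series for `B⁻`, with the factor `(sin(πx)/π)²` absorbed into the
translates of `K`, so that they are continuous everywhere. -/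
noncomputable def BSBminusPartial (N : ℕ) (x : ℝ) : ℝ :=
  2 * (x * BSK x) - BSK x + ∑ n ∈ Finset.range N, (BSK (x - (n + 1 : ℕ)) - BSK (x + (n + 1 : ℕ)))

lemma tendsto_BSBminusPartial {x : ℝ} (hx : ∀ n : ℤ, x ≠ n) :
    Tendsto (fun N => BSBminusPartial N x) atTop (𝓝 (BSBminus x)) := by
  have hseries := ((summable_BSK_add_nat (-x)).hasSum.sub
    (summable_BSK_add_nat x).hasSum).tendsto_sum_nat
  rw [BSBminus, BSH_eq hx, add_sub_right_comm, mul_assoc]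
  simp only [BSBminusPartial, BSK_sub_eq_neg_add x]
  exact tendsto_const_nhds.add hseries

lemma sum_BSK_add_nat_mem_Icc (N : ℕ) (x : ℝ) :
    ∑ n ∈ Finset.range N, BSK (x + (n + 1 : ℕ)) ∈ Set.Icc 0 (fejerTail x) :=
  ⟨Finset.sum_nonneg fun _ _ => BSK_nonneg _,
    (summable_BSK_add_nat x).sum_le_tsum _ fun _ _ => BSK_nonneg _⟩

lemma abs_mul_BSK_le (x : ℝ) : |x * BSK x| ≤ 1 / 3 := by
  refine abs_le_of_sq_le_sq ?_ (by norm_num)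
  nlinarith [sq_mul_BSK_le x, BSK_le_one x, mul_nonneg (sq_nonneg x) (BSK_nonneg x)]

lemma abs_BSBminusPartial_le (N : ℕ) (x : ℝ) : |BSBminusPartial N x| ≤ 2 := by
  have hpos := sum_BSK_add_nat_mem_Icc N x
  have hneg := sum_BSK_add_nat_mem_Icc N (-x)
  simp only [← BSK_sub_eq_neg_add x] at hneg
  have hsum := fejerTail_neg_add_BSK_add_fejerTail x
  have hmain := abs_le.1 (abs_mul_BSK_le x)
  rw [BSBminusPartial, Finset.sum_sub_distrib, abs_le]
  constructor <;> linarith [hpos.1, hpos.2, hneg.1, hneg.2, BSK_nonneg x]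

lemma isBandLimited_sinc : IsBandLimited (1 / 2) fun x : ℝ => (Real.sinc (Real.pi * x) : ℂ) := by
  refine ⟨(Set.Ioc (-(1 / 2)) (1 / 2)).indicator 1, ?_, fun t ht => ?_, funext fun x => ?_⟩
  · exact (integrable_indicator_iff measurableSet_Ioc).2 (integrableOn_const (by simp))
  · obtain ⟨hl, hu⟩ := Set.mem_of_indicator_ne_zero ht
    exact mem_closedBall_zero_iff.2 (abs_le.2 ⟨hl.le, hu⟩)
  · rw [← Real.sinc_neg, ← mul_neg, ← integral_exp_eq_sinc, Real.fourier_real_eq_integral_exp_smul,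
      intervalIntegral.integral_of_le (by norm_num), ← integral_indicator measurableSet_Ioc]
    refine integral_congr_ae (.of_forall fun t => ?_)
    by_cases ht : t ∈ Set.Ioc (-(1 / 2) : ℝ) (1 / 2)
    · simp only [Set.indicator_of_mem ht, Pi.one_apply, smul_eq_mul, mul_one]
      push_cast
      ring_nf
    · simp only [Set.indicator_of_notMem ht, smul_zero]

lemma isBandLimited_BSK : IsBandLimited 1 fun x => (BSK x : ℂ) := by
  convert! isBandLimited_sinc.smul isBandLimited_sinc using 1
  · norm_num
  · ext x
    simp [BSK_eq_sinc_sq, sq]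

lemma isBandLimited_mul_BSK : IsBandLimited 1 fun x => ((x * BSK x : ℝ) : ℂ) := by
  convert! (isBandLimited_sinc.sin_smul (1 / 2)).const_smul (1 / Real.pi) using 1
  · norm_num
  · ext x
    rcases eq_or_ne x 0 with rfl | hx
    · simp
    have hθ : Real.pi * x ≠ 0 := mul_ne_zero Real.pi_ne_zero hx
    have hphase : 2 * Real.pi * ⟪(1 / 2 : ℝ), x⟫ = Real.pi * x := by
      rw [real_inner_eq_re_inner, RCLike.inner_apply]
      norm_num
      ring
    simp only [BSK_eq_sinc_sq, Real.sinc_of_ne_zero hθ, Pi.smul_apply, Complex.real_smul,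
      smul_eq_mul, hphase]
    push_cast
    field_simp

lemma isBandLimited_BSBminusPartial (N : ℕ) :
    IsBandLimited 1 fun x => (BSBminusPartial N x : ℂ) := by
  induction N with
  | zero =>
    convert! (isBandLimited_mul_BSK.const_smul 2).sub isBandLimited_BSK using 1
    ext x
    simp [BSBminusPartial]
  | succ N ih =>
    convert! ih.add ((isBandLimited_BSK.comp_add_right (-((N + 1 : ℕ) : ℝ))).sub
      (isBandLimited_BSK.comp_add_right (N + 1 : ℕ))) using 1
    ext x
    simp only [BSBminusPartial, Finset.sum_range_succ, Pi.add_apply, Pi.sub_apply,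
      sub_eq_add_neg x]
    push_cast
    ring

lemma fourier_BSF_eq_zero {Δ a b : ℝ} (hΔ : 0 < Δ) (hab : a ≤ b) {y : ℝ} (hy : Δ ≤ |y|) :
    𝓕 (fun x => (BSF Δ a b x : ℂ)) y = 0 := by
  refine fourier_eq_zero_of_tendsto_isBandLimited (M := 2) hΔ.ne' (integrable_BSF hΔ hab).ofReal
    (F := fun N x => ((1 / 2 * (BSBminusPartial N (Δ * (x - a)) +
      BSBminusPartial N (Δ * (b - x))) : ℝ) : ℂ))
    (fun N => ?_) (fun N x => ?_) ?_ hy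
  · have h₁ := (isBandLimited_BSBminusPartial N).comp_smul_sub hΔ.ne' a
    have h₂ := (isBandLimited_BSBminusPartial N).comp_smul_sub (neg_ne_zero.2 hΔ.ne') b
    rw [abs_of_pos hΔ, mul_one] at h₁
    rw [abs_neg, abs_of_pos hΔ, mul_one] at h₂
    convert! (h₁.add h₂).const_smul (1 / 2) using 1
    ext x
    simp [neg_mul, ← mul_neg]
  · rw [Complex.norm_real, Real.norm_eq_abs, abs_mul, abs_of_pos one_half_pos]
    have := abs_add_le (BSBminusPartial N (Δ * (x - a))) (BSBminusPartial N (Δ * (b - x)))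
    linarith [abs_BSBminusPartial_le N (Δ * (x - a)), abs_BSBminusPartial_le N (Δ * (b - x))]
  · filter_upwards [ae_mul_sub_const_ne_intCast hΔ.ne' a,
      ae_mul_const_sub_ne_intCast hΔ.ne' b] with x h₁ h₂
    exact (Complex.continuous_ofReal.tendsto _).comp
      (((tendsto_BSBminusPartial h₁).add (tendsto_BSBminusPartial h₂)).const_mul _)

end Minorant

theorem stmt_19_general {Δ a b : ℝ} (hΔ : 0 < Δ) (hab : a ≤ b) :
    (∀ᵐ x : ℝ, |BSF Δ a b x| ≤ 1 ∧
      0 ≤ Set.indicator (Set.Icc a b) (fun _ => (1 : ℝ)) x - BSF Δ a b x ∧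
      Set.indicator (Set.Icc a b) (fun _ => (1 : ℝ)) x - BSF Δ a b x ≤
        BSK (Δ * (x - a)) + BSK (Δ * (b - x))) ∧
    Integrable (BSF Δ a b) ∧
    (∀ y : ℝ, Δ ≤ |y| →
      (∫ x : ℝ, (BSF Δ a b x : ℂ) *
        Complex.exp (((-2) * Real.pi * x * y : ℝ) * Complex.I)) = 0) ∧
    (∀ y : ℝ,
      ‖(∫ x : ℝ, (BSF Δ a b x : ℂ) *
          Complex.exp (((-2) * Real.pi * x * y : ℝ) * Complex.I)) -
        ∫ x in a..b, Complex.exp (((-2) * Real.pi * x * y : ℝ) * Complex.I)‖ ≤ 2 / Δ) :=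
  ⟨BSF_bounds_ae hΔ hab, integrable_BSF hΔ hab,
    fun y hy => (fourier_ofReal_eq_integral _ y).symm.trans (fourier_BSF_eq_zero hΔ hab hy),
    norm_fourier_BSF_sub_le hΔ hab⟩

/-- Properties of the Beurling–Selberg minorant `F` of the indicator of `I = [a, b]`:
(i) almost everywhere, `|F| ≤ 1` and `0 ≤ 1_I − F ≤ K(Δ(·−a)) + K(Δ(b−·))`;
(ii) `F` is integrable and its Fourier transform vanishes for `|y| ≥ Δ`;
(iii) for an absolute constant `C > 0`, `|F̂(y) − 1̂_I(y)| ≤ C/Δ` whenever `|y| < Δ`. -/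
theorem stmt_19 :
    ∃ C : ℝ, 0 < C ∧ ∀ Δ a b : ℝ, 0 < Δ → a < b →
      (∀ᵐ x : ℝ, |BSF Δ a b x| ≤ 1 ∧
        0 ≤ Set.indicator (Set.Icc a b) (fun _ => (1 : ℝ)) x - BSF Δ a b x ∧
        Set.indicator (Set.Icc a b) (fun _ => (1 : ℝ)) x - BSF Δ a b x ≤
          BSK (Δ * (x - a)) + BSK (Δ * (b - x))) ∧
      Integrable (BSF Δ a b) ∧
      (∀ y : ℝ, Δ ≤ |y| →
        (∫ x : ℝ, (BSF Δ a b x : ℂ) *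
          Complex.exp (((-2) * Real.pi * x * y : ℝ) * Complex.I)) = 0) ∧
      (∀ y : ℝ, |y| < Δ →
        ‖(∫ x : ℝ, (BSF Δ a b x : ℂ) *
            Complex.exp (((-2) * Real.pi * x * y : ℝ) * Complex.I)) -
          ∫ x in a..b, Complex.exp (((-2) * Real.pi * x * y : ℝ) * Complex.I)‖ ≤ C / Δ) :=
  ⟨2, two_pos, fun _ _ _ hΔ hab =>
    have ⟨hbounds, hint, hvanish, hdist⟩ := stmt_19_general hΔ hab.le
    ⟨hbounds, hint, hvanish, fun y _ => hdist y⟩⟩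
end
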